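/- arXiv:2407.05880 — 6 statements merged into one kernel-verified Lean document; each statement's English description precedes it below -/
import Mathlib

section
/- Let X be a compact Hausdorff space, n ≥ 1, and let p, q : X → Mₙ(ℝ) be continuous maps such that p(x) and q(x) are projections for every x. Suppose a : X → Mₙ(ℝ) is continuous and satisfies q(x)·a(x)·p(x) = a(x) for all x, and for each x the linear map v ↦ a(x)·v restricts to a bijection from the range of p(x) onto the range of q(x). Then there exists a continuous s : X → Mₙ(ℝ) which is a partial isometry implementing an equivalence of p and q: s(x)ᵀ·s(x) = p(x) and s(x)·s(x)ᵀ = q(x) for all x ∈ X. -/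
open Matrix

/-!
The matrix `b = aᴴa + (1 - p)` is positive definite because `a` is injective on the range of `p`,
and it is block diagonal with respect to `p`, with blocks `aᴴa` and `1`. Hence `s = a b^(-1/2)`
depends continuously on the data and satisfies `sᴴs = b^(-1/2) aᴴa b^(-1/2) = p`. Moreover `ssᴴ`
fixes the range of `a`, hence that of `q`, so `ssᴴ = ssᴴq = q`. Adding `1 - p` replaces the
function `t ↦ t^(-1/2)`, `0 ↦ 0`, which needs a uniform spectral gap because it is discontinuous
at `0`, by a function that is continuous on `(0, ∞)`.
-/

section Rpow

variable {A : Type*} [PartialOrder A] [Ring A] [StarRing A] [TopologicalSpace A]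
  [StarOrderedRing A] [Algebra ℝ A] [ContinuousFunctionalCalculus ℝ A IsSelfAdjoint]
  [NonnegSpectrumClass ℝ A] {b c : A}

theorem rpow_neg_half_mul_rpow_neg_half_mul_self (hb : IsStrictlyPositive b) :
    b ^ (-(1 / 2) : ℝ) * b ^ (-(1 / 2) : ℝ) * b = 1 := by
  calc b ^ (-(1 / 2) : ℝ) * b ^ (-(1 / 2) : ℝ) * b = b ^ (-1 : ℝ) * b ^ (1 : ℝ) := by
        rw [← CFC.rpow_add hb.isUnit, CFC.rpow_one b hb.nonneg]; norm_num
    _ = 1 := CFC.rpow_neg_mul_rpow 1 hb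

theorem rpow_neg_half_mul_self_mul_mul_rpow_neg_half [IsTopologicalRing A] [T2Space A]
    (hb : IsStrictlyPositive b) (h : Commute b c) :
    b ^ (-(1 / 2) : ℝ) * (b * c) * b ^ (-(1 / 2) : ℝ) = c := by
  have hbc : Commute (b ^ (-(1 / 2) : ℝ)) (b * c) :=
    ((Commute.refl b).mul_right h).cfc_nnreal _
  rw [mul_assoc, ← hbc.eq, ← mul_assoc, ← mul_assoc,
    rpow_neg_half_mul_rpow_neg_half_mul_self hb, one_mul]

end Rpow

theorem continuous_rpow_of_isStrictlyPositive {X A : Type*} [TopologicalSpace X] [NormedRing A]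
    [StarRing A] [ContinuousStar A] [NormedAlgebra ℝ A] [CompleteSpace A] [PartialOrder A]
    [StarOrderedRing A] [NonnegSpectrumClass ℝ A]
    [IsometricContinuousFunctionalCalculus ℝ A IsSelfAdjoint]
    {b : X → A} (hb : Continuous b) (hpos : ∀ x, IsStrictlyPositive (b x)) (y : ℝ) :
    Continuous fun x ↦ b x ^ y := by
  have hspec : Set.Ioi (0 : ℝ) ∈ nhdsSet (⋃ x, spectrum ℝ (b x)) :=
    isOpen_Ioi.mem_nhdsSet.2 <| Set.iUnion_subset fun x _ ht ↦ (hpos x).spectrum_pos ht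
  have hrpow : ContinuousOn (fun t : ℝ ↦ t ^ y) (Set.Ioi 0) :=
    continuousOn_id.rpow_const fun t ht ↦ Or.inl (ne_of_gt ht)
  simp only [CFC.rpow_eq_cfc_real (hpos _).nonneg]
  exact hb.cfc_of_mem_nhdsSet _ hspec (fun x ↦ (hpos x).isSelfAdjoint) hrpow

theorem mul_eq_right_of_range_mulVec_subset {R l m n : Type*} [Semiring R] [Fintype l] [Fintype m]
    [Fintype n] {e : Matrix n n R} {a : Matrix n m R} {q : Matrix n l R} (he : e * a = a)
    (hrange : Set.range q.mulVec ⊆ Set.range a.mulVec) : e * q = q := by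
  apply Matrix.mulVec_injective
  funext v
  obtain ⟨w, hw⟩ := hrange ⟨v, rfl⟩
  calc (e * q) *ᵥ v = e *ᵥ (a *ᵥ w) := by rw [← mulVec_mulVec, hw]
    _ = q *ᵥ v := by rw [mulVec_mulVec, he, hw]

section FilledGram

variable {R m n : Type*} [Ring R] [StarRing R] [DecidableEq m] [Fintype n]

/-- The matrix `aᴴa + (1 - p)`: for `a` supported on a projection `p`, this is `aᴴa` with its
corner at `1 - p` filled in by the identity, so that it can be inverted. -/
def filledGram (p : Matrix m m R) (a : Matrix n m R) : Matrix m m R :=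
  aᴴ * a + (1 - p)

theorem continuous_filledGram {X : Type*} [TopologicalSpace X] [TopologicalSpace R]
    [IsTopologicalRing R] [ContinuousStar R] {p : X → Matrix m m R} {a : X → Matrix n m R}
    (hp : Continuous p) (ha : Continuous a) : Continuous fun x ↦ filledGram (p x) (a x) :=
  (ha.matrix_conjTranspose.matrix_mul ha).add (continuous_const.sub hp)

variable [Fintype m] {p : Matrix m m R} {a : Matrix n m R}

theorem filledGram_mul (hp : IsStarProjection p) (hap : a * p = a) :
    filledGram p a * p = aᴴ * a := by
  rw [filledGram, add_mul, hp.one_sub_mul_self, add_zero, Matrix.mul_assoc, hap]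

theorem mul_filledGram (hp : IsStarProjection p) (hap : a * p = a) :
    p * filledGram p a = aᴴ * a := by
  have hpa : p * aᴴ = aᴴ := by
    simpa [hp.isSelfAdjoint.star_eq, ← star_eq_conjTranspose p] using congrArg conjTranspose hap
  rw [filledGram, mul_add, hp.mul_one_sub_self, add_zero, ← Matrix.mul_assoc, hpa]

theorem commute_filledGram (hp : IsStarProjection p) (hap : a * p = a) :
    Commute (filledGram p a) p :=
  (filledGram_mul hp hap).trans (mul_filledGram hp hap).symm

end FilledGram

section PolarPart

variable {𝕜 m n : Type*} [RCLike 𝕜] [Fintype m] [DecidableEq m] [Fintype n]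
  {p : Matrix m m 𝕜} {q : Matrix n n 𝕜} {a : Matrix n m 𝕜}

open scoped MatrixOrder ComplexOrder

theorem posDef_filledGram (hp : IsStarProjection p)
    (hinj : Set.InjOn a.mulVec (Set.range p.mulVec)) : (filledGram p a).PosDef := by
  have ha : (aᴴ * a).PosSemidef := posSemidef_conjTranspose_mul_self a
  have hp' : (1 - p).PosSemidef := nonneg_iff_posSemidef.1 hp.one_sub.nonneg
  refine PosDef.of_dotProduct_mulVec_pos (ha.add hp').1 fun v hv ↦ ?_
  refine ((ha.add hp').dotProduct_mulVec_nonneg v).lt_of_ne' fun h ↦ hv ?_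
  rw [add_mulVec, dotProduct_add, add_eq_zero_iff_of_nonneg (ha.dotProduct_mulVec_nonneg v)
    (hp'.dotProduct_mulVec_nonneg v), ha.dotProduct_mulVec_zero_iff,
    hp'.dotProduct_mulVec_zero_iff] at h
  have hav : a *ᵥ v = 0 := (conjTranspose_mul_self_mulVec_eq_zero a v).1 h.1
  have hpv : p *ᵥ v = v := by simpa [sub_mulVec, sub_eq_zero, eq_comm] using h.2
  exact hinj ⟨v, hpv⟩ ⟨0, mulVec_zero p⟩ (hav.trans (mulVec_zero a).symm)

/-- The partial isometry in the polar decomposition of an `a` that is injective on the range of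
the projection `p` and vanishes on its complement. Taking the power of the filled Gram
matrix rather than of `aᴴa` makes it depend continuously on `p` and `a`. -/
noncomputable def polarPart (p : Matrix m m 𝕜) (a : Matrix n m 𝕜) : Matrix n m 𝕜 :=
  a * filledGram p a ^ (-(1 / 2) : ℝ)

theorem conjTranspose_polarPart (p : Matrix m m 𝕜) (a : Matrix n m 𝕜) :
    (polarPart p a)ᴴ = filledGram p a ^ (-(1 / 2) : ℝ) * aᴴ := by
  have hr : (filledGram p a ^ (-(1 / 2) : ℝ))ᴴ = filledGram p a ^ (-(1 / 2) : ℝ) :=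
    (IsSelfAdjoint.of_nonneg CFC.rpow_nonneg).star_eq
  rw [polarPart, conjTranspose_mul, hr]

theorem conjTranspose_polarPart_mul_self (hp : IsStarProjection p) (hap : a * p = a)
    (hpos : (filledGram p a).PosDef) : (polarPart p a)ᴴ * polarPart p a = p := by
  calc (polarPart p a)ᴴ * polarPart p a
      = filledGram p a ^ (-(1 / 2) : ℝ) * (filledGram p a * p) *
          filledGram p a ^ (-(1 / 2) : ℝ) := by
        rw [conjTranspose_polarPart, polarPart, filledGram_mul hp hap]
        simp only [Matrix.mul_assoc]
    _ = p := rpow_neg_half_mul_self_mul_mul_rpow_neg_half hpos.isStrictlyPositive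
        (commute_filledGram hp hap)

theorem polarPart_mul_conjTranspose_mul (hp : IsStarProjection p) (hap : a * p = a)
    (hpos : (filledGram p a).PosDef) : polarPart p a * (polarPart p a)ᴴ * a = a := by
  calc polarPart p a * (polarPart p a)ᴴ * a
      = a * (filledGram p a ^ (-(1 / 2) : ℝ) * filledGram p a ^ (-(1 / 2) : ℝ) *
          filledGram p a * p) := by
        rw [conjTranspose_polarPart, polarPart, Matrix.mul_assoc _ (filledGram p a) p,
          filledGram_mul hp hap]
        simp only [Matrix.mul_assoc]
    _ = a := by
        rw [rpow_neg_half_mul_rpow_neg_half_mul_self hpos.isStrictlyPositive, one_mul, hap]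

theorem polarPart_mul_conjTranspose_self (hp : IsStarProjection p) (hq : q.IsHermitian)
    (hap : a * p = a) (hqa : q * a = a) (hpos : (filledGram p a).PosDef)
    (hrange : Set.range q.mulVec ⊆ Set.range a.mulVec) :
    polarPart p a * (polarPart p a)ᴴ = q := by
  have haq : aᴴ * q = aᴴ := by simpa [hq.eq] using congrArg conjTranspose hqa
  calc polarPart p a * (polarPart p a)ᴴ = polarPart p a * (polarPart p a)ᴴ * q := by
        simp only [conjTranspose_polarPart, Matrix.mul_assoc, haq]
    _ = q := mul_eq_right_of_range_mulVec_subset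
        (polarPart_mul_conjTranspose_mul hp hap hpos) hrange

open scoped Matrix.Norms.L2Operator in
theorem continuous_polarPart {X : Type*} [TopologicalSpace X] {p : X → Matrix m m 𝕜}
    {a : X → Matrix n m 𝕜} (hp : Continuous p) (ha : Continuous a)
    (hpos : ∀ x, (filledGram (p x) (a x)).PosDef) : Continuous fun x ↦ polarPart (p x) (a x) := by
  -- The scoped instance is over `𝕜`, and `NormedAlgebra.restrictScalars` would change the
  -- `ℝ`-algebra structure for which the functional calculus is stated.
  let : NormedAlgebra ℝ (Matrix m m 𝕜) :=
    { norm_smul_le t b := by simpa using norm_smul_le (t : 𝕜) b }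
  exact ha.matrix_mul <| continuous_rpow_of_isStrictlyPositive (continuous_filledGram hp ha)
    (fun x ↦ (hpos x).isStrictlyPositive) _

end PolarPart

open scoped ComplexOrder in
theorem exists_continuous_partial_isometry_general {X 𝕜 m n : Type*} [TopologicalSpace X]
    [RCLike 𝕜] [Fintype m] [Fintype n] (p : C(X, Matrix m m 𝕜)) (q : C(X, Matrix n n 𝕜))
    (a : C(X, Matrix n m 𝕜)) (hp : ∀ x, IsStarProjection (p x))
    (hq : ∀ x, IsStarProjection (q x)) (ha : ∀ x, q x * a x * p x = a x)
    (hbij : ∀ x, Set.BijOn (a x).mulVec (Set.range (p x).mulVec) (Set.range (q x).mulVec)) :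
    ∃ s : C(X, Matrix n m 𝕜), ∀ x, (s x)ᴴ * s x = p x ∧ s x * (s x)ᴴ = q x := by
  classical
  have hap x : a x * p x = a x := by
    rw [← ha x, Matrix.mul_assoc, (hp x).isIdempotentElem.eq]
  have hqa x : q x * a x = a x := by
    rw [← ha x, ← Matrix.mul_assoc, ← Matrix.mul_assoc, (hq x).isIdempotentElem.eq]
  have hpos x : (filledGram (p x) (a x)).PosDef := posDef_filledGram (hp x) (hbij x).injOn
  have hrange x : Set.range (q x).mulVec ⊆ Set.range (a x).mulVec :=
    (hbij x).surjOn.trans (Set.image_subset_range _ _)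
  exact ⟨⟨fun x ↦ polarPart (p x) (a x), continuous_polarPart p.continuous a.continuous hpos⟩,
    fun x ↦ ⟨conjTranspose_polarPart_mul_self (hp x) (hap x) (hpos x),
      polarPart_mul_conjTranspose_self (hp x) (hq x).isSelfAdjoint (hap x) (hqa x) (hpos x)
        (hrange x)⟩⟩

/-- over a compact Hausdorff base, a continuous intertwiner `a` with
`q·a·p = a` that is fiberwise a bijection from the range of `p(x)` onto the range of
`q(x)` yields a continuous partial isometry `s` with `sᵀs = p` and `ssᵀ = q`. -/
theorem exists_continuous_partial_isometry
    {X : Type*} [TopologicalSpace X] [CompactSpace X] [T2Space X] {n : ℕ} (hn : 1 ≤ n)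
    (p q a : C(X, Matrix (Fin n) (Fin n) ℝ))
    (hp : ∀ x, p x * p x = p x ∧ (p x)ᵀ = p x)
    (hq : ∀ x, q x * q x = q x ∧ (q x)ᵀ = q x)
    (ha : ∀ x, q x * a x * p x = a x)
    (hbij : ∀ x, Set.BijOn (a x).mulVec
      (Set.range (p x).mulVec) (Set.range (q x).mulVec)) :
    ∃ s : C(X, Matrix (Fin n) (Fin n) ℝ),
      ∀ x, (s x)ᵀ * s x = p x ∧ s x * (s x)ᵀ = q x :=
  exists_continuous_partial_isometry_general p q a (fun x ↦ ⟨(hp x).1, (hp x).2⟩)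
    (fun x ↦ ⟨(hq x).1, (hq x).2⟩) ha hbij
end

section
/- Let X be a topological space, n ≥ 1, and let p : X → Mₙ(ℝ) be a continuous map with p(x)² = p(x) and p(x)ᵀ = p(x) for all x. Then E_p = {(x, v) ∈ X × ℝⁿ : p(x)·v = v} is a locally trivial real vector bundle over X: for every x₀ ∈ X there exist an open neighborhood U of x₀, an integer k (the rank of p(x₀)), and a homeomorphism h from {(x,v) ∈ E_p : x ∈ U} onto U × ℝᵏ which commutes with the projections to U and is ℝ-linear and bijective on each fiber. -/
open Matrix

/-!
For idempotents `e` and `f` of a ring, `g = e f + (1 - e) (1 - f)` satisfies `e g = e f = g f`, and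
`g = 1` if `f = e`. With `e = p x₀` and `f = p x`, the matrix `g` depends continuously on `x`, so it
is invertible for `x` near `x₀`, and there `p x = g⁻¹ (p x₀) g`. Writing `p x₀ = B A` with `A B = 1`
and `A`, `B` of size `rank × n`, `n × rank`, we get a factorization `p x = (g⁻¹ B) (A g)` of the
same kind, and `v ↦ A g v` is the trivialization, with inverse `w ↦ g⁻¹ B w`.
-/

section Intertwiner

variable {R : Type*} [Ring R] {e f : R}

/-- The element `e f + (1 - e) (1 - f)` intertwining two idempotents `e` and `f` of a ring; it
conjugates one into the other as soon as it is invertible. -/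
def idempotentIntertwiner (e f : R) : R :=
  e * f + (1 - e) * (1 - f)

theorem idempotentIntertwiner_self (he : IsIdempotentElem e) : idempotentIntertwiner e e = 1 := by
  rw [idempotentIntertwiner, he.eq, he.one_sub.eq, add_sub_cancel]

theorem mul_idempotentIntertwiner (he : IsIdempotentElem e) :
    e * idempotentIntertwiner e f = e * f := by
  rw [idempotentIntertwiner, mul_add, ← mul_assoc, ← mul_assoc, he.eq, he.mul_one_sub_self,
    zero_mul, add_zero]

theorem idempotentIntertwiner_mul (hf : IsIdempotentElem f) :
    idempotentIntertwiner e f * f = e * f := by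
  rw [idempotentIntertwiner, add_mul, mul_assoc, mul_assoc, hf.eq, hf.one_sub_mul_self,
    mul_zero, add_zero]

theorem continuous_idempotentIntertwiner [TopologicalSpace R] [IsTopologicalRing R] (e : R) :
    Continuous (idempotentIntertwiner e) := by
  unfold idempotentIntertwiner
  fun_prop

end Intertwiner

section Factorization

variable {ι κ : Type*} [Fintype ι]

theorem inv_mul_mul_idempotentIntertwiner {R : Type*} [CommRing R] [DecidableEq ι]
    {e f : Matrix ι ι R} (he : IsIdempotentElem e) (hf : IsIdempotentElem f)
    (h : IsUnit (idempotentIntertwiner e f).det) :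
    (idempotentIntertwiner e f)⁻¹ * e * idempotentIntertwiner e f = f := by
  rw [mul_assoc, mul_idempotentIntertwiner he, ← idempotentIntertwiner_mul hf,
    nonsing_inv_mul_cancel_left _ _ h]

theorem exists_rank_factorization_of_isIdempotentElem {𝕜 : Type*} [Field 𝕜] {P : Matrix ι ι 𝕜}
    (hP : IsIdempotentElem P) :
    ∃ (A : Matrix (Fin P.rank) ι 𝕜) (B : Matrix ι (Fin P.rank) 𝕜), A * B = 1 ∧ B * A = P := by
  classical
  have hidem : IsIdempotentElem P.mulVecLin := by
    rw [IsIdempotentElem, Module.End.mul_eq_comp, ← mulVecLin_mul, hP.eq]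
  have hproj : LinearMap.IsProj P.mulVecLin.range P.mulVecLin :=
    LinearMap.IsIdempotentElem.isProj_range _ hidem
  let φ : P.mulVecLin.range ≃ₗ[𝕜] (Fin P.rank → 𝕜) :=
    LinearEquiv.ofFinrankEq _ _ (Module.finrank_fin_fun 𝕜).symm
  let α : (ι → 𝕜) →ₗ[𝕜] (Fin P.rank → 𝕜) := φ.toLinearMap ∘ₗ hproj.codRestrict
  let β : (Fin P.rank → 𝕜) →ₗ[𝕜] (ι → 𝕜) := P.mulVecLin.range.subtype ∘ₗ φ.symm.toLinearMap
  have hαβ : α ∘ₗ β = LinearMap.id := LinearMap.ext fun w => by simp [α, β]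
  have hβα : β ∘ₗ α = P.toLin' := LinearMap.ext fun v => by simp [α, β]
  exact ⟨α.toMatrix', β.toMatrix', by rw [← LinearMap.toMatrix'_comp, hαβ, LinearMap.toMatrix'_id],
    by rw [← LinearMap.toMatrix'_comp, hβα, LinearMap.toMatrix'_toLin']⟩

theorem continuous_matrix_inv_of_det_ne_zero {Y 𝕜 : Type*} [TopologicalSpace Y] [DecidableEq ι]
    [Field 𝕜] [TopologicalSpace 𝕜] [IsTopologicalDivisionRing 𝕜] {g : Y → Matrix ι ι 𝕜}
    (hg : Continuous g) (hdet : ∀ y, (g y).det ≠ 0) : Continuous fun y => (g y)⁻¹ := by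
  refine continuous_iff_continuousAt.mpr fun y => ?_
  have hinv : ContinuousAt Ring.inverse (g y).det := by
    rw [Ring.inverse_eq_inv']
    exact continuousAt_inv₀ (hdet y)
  exact (continuousAt_matrix_inv _ hinv).comp hg.continuousAt

theorem exists_isOpen_continuous_factorization {X 𝕜 : Type*} [TopologicalSpace X]
    [Fintype κ] [DecidableEq κ] [Field 𝕜] [TopologicalSpace 𝕜] [IsTopologicalDivisionRing 𝕜]
    [T1Space 𝕜] {p : X → Matrix ι ι 𝕜} (hp : Continuous p) (hidem : ∀ x, IsIdempotentElem (p x))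
    {x₀ : X} {A : Matrix κ ι 𝕜} {B : Matrix ι κ 𝕜} (hAB : A * B = 1) (hBA : B * A = p x₀) :
    ∃ U : Set X, IsOpen U ∧ x₀ ∈ U ∧
      ∃ (a : U → Matrix κ ι 𝕜) (b : U → Matrix ι κ 𝕜), Continuous a ∧ Continuous b ∧
        (∀ x, a x * b x = 1) ∧ ∀ x, b x * a x = p x := by
  classical
  let g (x : X) : Matrix ι ι 𝕜 := idempotentIntertwiner (p x₀) (p x)
  have hg : Continuous g := (continuous_idempotentIntertwiner _).comp hp
  let U : Set X := {x | (g x).det ≠ 0}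
  have hunit (x : U) : IsUnit (g x).det := isUnit_iff_ne_zero.mpr x.2
  have hgU : Continuous fun x : U => g x := hg.comp continuous_subtype_val
  have hginv : Continuous fun x : U => (g x)⁻¹ :=
    continuous_matrix_inv_of_det_ne_zero hgU fun x => x.2
  refine ⟨U, isOpen_compl_singleton.preimage hg.matrix_det, ?_, fun x => A * g x,
    fun x => (g x)⁻¹ * B, continuous_const.matrix_mul hgU, hginv.matrix_mul continuous_const,
    fun x => ?_, fun x => ?_⟩
  · simp [U, g, idempotentIntertwiner_self (hidem x₀)]
  · rw [Matrix.mul_assoc, mul_nonsing_inv_cancel_left _ _ (hunit x), hAB]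
  · calc (g x)⁻¹ * B * (A * g x) = (g x)⁻¹ * (B * A) * g x := by simp only [Matrix.mul_assoc]
      _ = (g x)⁻¹ * p x₀ * g x := by rw [hBA]
      _ = p x := inv_mul_mul_idempotentIntertwiner (hidem x₀) (hidem x) (hunit x)

end Factorization

/-- The part over `U` of the bundle of fixed vectors `{(x, v) : p x *ᵥ v = v}`; when the `p x` are
idempotent, its fibre at `x` is the range of `p x`. It is a subtype of `X × (ι → R)`, so that it
carries the subspace topology. -/
abbrev RangeOver {X ι R : Type*} [Fintype ι] [NonUnitalNonAssocSemiring R]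
    (p : X → Matrix ι ι R) (U : Set X) : Type _ :=
  {z : X × (ι → R) // p z.1 *ᵥ z.2 = z.2 ∧ z.1 ∈ U}

namespace RangeOver

variable {X ι κ R : Type*} [TopologicalSpace X] [Fintype ι] [Fintype κ] [DecidableEq κ]
  [TopologicalSpace R] {U : Set X}

section Semiring

variable [Semiring R] [IsTopologicalSemiring R] {p : X → Matrix ι ι R}
  {a : U → Matrix κ ι R} {b : U → Matrix ι κ R}

/-- The trivialization `(x, v) ↦ (x, a x *ᵥ v)` over `U` given by a continuous factorization
`p x = b x * a x` with `a x * b x = 1`; its inverse is `(x, w) ↦ (x, b x *ᵥ w)`. -/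
def trivialization (ha : Continuous a) (hb : Continuous b) (hab : ∀ x, a x * b x = 1)
    (hba : ∀ x, b x * a x = p x) : RangeOver p U ≃ₜ U × (κ → R) where
  toFun z := (⟨z.1.1, z.2.2⟩, a ⟨z.1.1, z.2.2⟩ *ᵥ z.1.2)
  invFun y := ⟨(y.1, b y.1 *ᵥ y.2), by
    rw [← hba, mulVec_mulVec, Matrix.mul_assoc, hab, Matrix.mul_one], y.1.2⟩
  left_inv z := Subtype.ext (Prod.ext rfl (by simpa only [mulVec_mulVec, hba] using z.2.1))
  right_inv y := Prod.ext rfl (by simp only [mulVec_mulVec, hab, one_mulVec])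
  continuous_toFun := by fun_prop
  continuous_invFun := by fun_prop

variable (ha : Continuous a) (hb : Continuous b) (hab : ∀ x, a x * b x = 1)
  (hba : ∀ x, b x * a x = p x)

theorem trivialization_apply (z : RangeOver p U) :
    trivialization ha hb hab hba z = (⟨z.1.1, z.2.2⟩, a ⟨z.1.1, z.2.2⟩ *ᵥ z.1.2) :=
  rfl

theorem trivialization_snd_add {z w v : RangeOver p U} (hzw : z.1.1 = w.1.1)
    (hv : v.1 = (z.1.1, z.1.2 + w.1.2)) :
    (trivialization ha hb hab hba v).2 =
      (trivialization ha hb hab hba z).2 + (trivialization ha hb hab hba w).2 := by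
  simp only [trivialization_apply, hv, mulVec_add, hzw]

end Semiring

theorem trivialization_snd_smul [CommSemiring R] [IsTopologicalSemiring R] {p : X → Matrix ι ι R}
    {a : U → Matrix κ ι R} {b : U → Matrix ι κ R} (ha : Continuous a) (hb : Continuous b)
    (hab : ∀ x, a x * b x = 1) (hba : ∀ x, b x * a x = p x) {z w : RangeOver p U} {r : R}
    (hw : w.1 = (z.1.1, r • z.1.2)) :
    (trivialization ha hb hab hba w).2 = r • (trivialization ha hb hab hba z).2 := by
  simp only [trivialization_apply, hw, mulVec_smul]

end RangeOver

theorem range_of_projection_is_locally_trivial_general {X ι 𝕜 : Type*} [TopologicalSpace X]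
    [Fintype ι] [Field 𝕜] [TopologicalSpace 𝕜] [IsTopologicalDivisionRing 𝕜] [T1Space 𝕜]
    (p : C(X, Matrix ι ι 𝕜)) (hp : ∀ x, IsIdempotentElem (p x)) (x₀ : X) :
    ∃ U : Set X, IsOpen U ∧ x₀ ∈ U ∧ ∃ h : RangeOver p U ≃ₜ U × (Fin (p x₀).rank → 𝕜),
      (∀ z, ((h z).1 : X) = z.1.1) ∧
      (∀ z w v : RangeOver p U, z.1.1 = w.1.1 → v.1 = (z.1.1, z.1.2 + w.1.2) →
        (h v).2 = (h z).2 + (h w).2) ∧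
      ∀ (z w : RangeOver p U) (r : 𝕜), w.1 = (z.1.1, r • z.1.2) → (h w).2 = r • (h z).2 := by
  obtain ⟨A, B, hAB, hBA⟩ := exists_rank_factorization_of_isIdempotentElem (hp x₀)
  obtain ⟨U, hU, hx₀, a, b, ha, hb, hab, hba⟩ :=
    exists_isOpen_continuous_factorization p.continuous hp hAB hBA
  exact ⟨U, hU, hx₀, RangeOver.trivialization ha hb hab hba, fun _ => rfl,
    fun _ _ _ => RangeOver.trivialization_snd_add ha hb hab hba,
    fun _ _ _ => RangeOver.trivialization_snd_smul ha hb hab hba⟩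

/-- for a continuous projection-valued map `p : X → Mₙ(ℝ)`, the space
`E_p = {(x,v) : p(x)v = v}` is a locally trivial real vector bundle over `X`: around
any point `x₀` there is an open set `U` and a fiberwise-linear homeomorphism of the
part of `E_p` over `U` with `U × ℝᵏ`, where `k` is the rank of `p(x₀)`. -/
theorem range_of_projection_is_locally_trivial
    {X : Type*} [TopologicalSpace X] {n : ℕ} (hn : 1 ≤ n)
    (p : C(X, Matrix (Fin n) (Fin n) ℝ))
    (hp : ∀ x, p x * p x = p x ∧ (p x)ᵀ = p x) (x₀ : X) :
    ∃ U : Set X, IsOpen U ∧ x₀ ∈ U ∧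
      ∃ (k : ℕ)
        (h : {z : X × (Fin n → ℝ) // (p z.1).mulVec z.2 = z.2 ∧ z.1 ∈ U} ≃ₜ
              U × (Fin k → ℝ)),
        k = (p x₀).rank ∧
        (∀ z, ((h z).1 : X) = (z : X × (Fin n → ℝ)).1) ∧
        (∀ z w v : {z : X × (Fin n → ℝ) // (p z.1).mulVec z.2 = z.2 ∧ z.1 ∈ U},
          (z : X × (Fin n → ℝ)).1 = (w : X × (Fin n → ℝ)).1 →
          (v : X × (Fin n → ℝ)) =
            ((z : X × (Fin n → ℝ)).1,
              (z : X × (Fin n → ℝ)).2 + (w : X × (Fin n → ℝ)).2) →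
          (h v).2 = (h z).2 + (h w).2) ∧
        (∀ (z w : {z : X × (Fin n → ℝ) // (p z.1).mulVec z.2 = z.2 ∧ z.1 ∈ U}) (r : ℝ),
          (w : X × (Fin n → ℝ)) =
            ((z : X × (Fin n → ℝ)).1, r • (z : X × (Fin n → ℝ)).2) →
          (h w).2 = r • (h z).2) := by
  obtain ⟨U, hU, hx₀, h, hfst, hadd, hsmul⟩ :=
    range_of_projection_is_locally_trivial_general p (fun x => (hp x).1) x₀
  exact ⟨U, hU, hx₀, _, h, rfl, hfst, hadd, hsmul⟩
end

section
/- Let X be a compact Hausdorff space and let E be a locally trivial topological real vector bundle over X with fibers of finite dimension. Then there exist an integer N ≥ 1, a continuous map p : X → M_N(ℝ) with p(x)² = p(x) and p(x)ᵀ = p(x) for all x, and a homeomorphism from the total space of E onto E_p = {(x, v) ∈ X × ℝᴺ : p(x)·v = v} which commutes with the projections to X and is ℝ-linear and bijective on each fiber. (In particular, E embeds as a fiberwise-injective bundle map into a trivial bundle X × ℝᴺ, and E is a direct summand of a trivial bundle.) -/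
open Matrix Bundle

/-!
Finitely many local trivializations `eᵢ` and functions `sᵢ` with `∑ sᵢ² = 1`, each `sᵢ` supported
where `eᵢ` is defined, make `E` a retract of the trivial bundle `X × (ι → F)`: include by
`v ↦ (sᵢ • eᵢ v)ᵢ`, retract by `w ↦ ∑ sᵢ • eᵢ⁻¹ wᵢ`. Composing the two the other way round gives a
continuous family of idempotent matrices `q` whose fixed vectors form a copy of `E`. Kaplansky's
formula `p = q (q + q* - 1)⁻¹` replaces `q` by the orthogonal projection onto the same range; it
depends continuously on `q` because `(q + q* - 1)² = 1 + (q - q*) (q - q*)*` is positive definite.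
-/

open Set Topology

section StarRing

variable {A : Type*} [Ring A]

theorem semiconjBy_add_sub_one {q r : A} (hq : IsIdempotentElem q) (hr : IsIdempotentElem r) :
    SemiconjBy (q + r - 1) q r := by
  simp only [SemiconjBy, mul_sub, sub_mul, mul_add, add_mul, hq.eq, hr.eq, mul_one, one_mul]
  abel

variable [StarRing A] {q : A}

theorem add_star_sub_one_sq (hq : IsIdempotentElem q) :
    (q + star q - 1) ^ 2 = 1 + (q - star q) * star (q - star q) := by
  simp only [star_sub, star_star, sq, mul_sub, sub_mul, add_mul, mul_add, hq.eq, hq.star.eq,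
    mul_one, one_mul]
  abel

theorem mul_inv_add_star_sub_one_mul_self (hq : IsIdempotentElem q) (u : Aˣ)
    (hu : (u : A) = q + star q - 1) : q * ↑u⁻¹ * q = q := by
  have semiconj : SemiconjBy (u : A) (star q) q := by
    simpa only [hu, add_comm q] using semiconjBy_add_sub_one hq.star hq
  calc q * ↑u⁻¹ * q = q * star q * ↑u⁻¹ := by
        rw [mul_assoc, semiconj.units_inv_symm_left.eq, mul_assoc]
    _ = q * u * ↑u⁻¹ := by simp only [hu, mul_sub, mul_add, hq.eq, mul_one, add_sub_cancel_left]
    _ = q := u.mul_inv_cancel_right q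

theorem isStarProjection_mul_inv_add_star_sub_one (hq : IsIdempotentElem q) (u : Aˣ)
    (hu : (u : A) = q + star q - 1) : IsStarProjection (q * ↑u⁻¹) where
  isIdempotentElem := by
    rw [IsIdempotentElem, ← mul_assoc, mul_inv_add_star_sub_one_mul_self hq u hu]
  isSelfAdjoint := by
    have semiconj : SemiconjBy (u : A) q (star q) := hu ▸ semiconjBy_add_sub_one hq hq.star
    have star_u : star u = u := Units.ext (by simp [hu, add_comm])
    have star_inv : star (↑u⁻¹ : A) = ↑u⁻¹ := by rw [← Units.coe_star_inv, star_u]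
    rw [IsSelfAdjoint, star_mul, star_inv, semiconj.units_inv_symm_left.eq]

end StarRing

section RangeProjection

variable {𝕜 m : Type*} [RCLike 𝕜] [Fintype m] [DecidableEq m] {q : Matrix m m 𝕜}

/-- The matrix of the orthogonal projection onto the range of an idempotent matrix `q`, by
Kaplansky's formula. -/
noncomputable def rangeProjection (q : Matrix m m 𝕜) : Matrix m m 𝕜 :=
  q * (q + star q - 1)⁻¹

open scoped ComplexOrder in
theorem isUnit_add_star_sub_one (hq : IsIdempotentElem q) : IsUnit (q + star q - 1) := by
  rw [← isUnit_pow_iff two_ne_zero, add_star_sub_one_sq hq]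
  exact (PosDef.one.add_posSemidef (posSemidef_self_mul_conjTranspose (q - star q))).isUnit

theorem isStarProjection_rangeProjection (hq : IsIdempotentElem q) :
    IsStarProjection (rangeProjection q) := by
  obtain ⟨u, hu⟩ := isUnit_add_star_sub_one hq
  rw [rangeProjection, ← hu, ← coe_units_inv]
  exact isStarProjection_mul_inv_add_star_sub_one hq u hu

theorem rangeProjection_mul_self (hq : IsIdempotentElem q) : rangeProjection q * q = q := by
  obtain ⟨u, hu⟩ := isUnit_add_star_sub_one hq
  rw [rangeProjection, ← hu, ← coe_units_inv, mul_inv_add_star_sub_one_mul_self hq u hu]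

theorem self_mul_rangeProjection (hq : IsIdempotentElem q) :
    q * rangeProjection q = rangeProjection q := by
  rw [rangeProjection, ← mul_assoc, hq.eq]

theorem rangeProjection_mulVec_eq_self_iff (hq : IsIdempotentElem q) {v : m → 𝕜} :
    rangeProjection q *ᵥ v = v ↔ q *ᵥ v = v := by
  constructor <;> intro hv
  · rw [← hv, mulVec_mulVec, self_mul_rangeProjection hq]
  · rw [← hv, mulVec_mulVec, rangeProjection_mul_self hq]

theorem continuousAt_rangeProjection (hq : IsIdempotentElem q) :
    ContinuousAt rangeProjection q := by
  have det_ne_zero : (q + star q - 1).det ≠ 0 :=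
    ((isUnit_iff_isUnit_det _).1 (isUnit_add_star_sub_one hq)).ne_zero
  have inv_cont : ContinuousAt (fun r : Matrix m m 𝕜 ↦ (r + star r - 1)⁻¹) q := by
    refine ContinuousAt.comp (f := fun r ↦ r + star r - 1) (continuousAt_matrix_inv _ ?_)
      (by fun_prop)
    simpa only [Ring.inverse_eq_inv'] using continuousAt_inv₀ det_ne_zero
  exact continuousAt_id.mul inv_cont

end RangeProjection

theorem exists_continuous_sum_mul_self_eq_one {X ι : Type*} [TopologicalSpace X]
    [NormalSpace X] [Fintype ι] {U : ι → Set X} (hU : ∀ i, IsOpen (U i))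
    (hcover : ⋃ i, U i = univ) :
    ∃ s : ι → C(X, ℝ), (∀ i, tsupport (s i) ⊆ U i) ∧ ∀ x, ∑ i, s i x * s i x = 1 := by
  obtain ⟨ρ, hρ⟩ := PartitionOfUnity.exists_isSubordinate_of_locallyFinite isClosed_univ U hU
    (locallyFinite_of_finite U) hcover.ge
  refine ⟨fun i ↦ ⟨fun x ↦ √(ρ i x), by fun_prop⟩, fun i ↦ ?_, fun x ↦ ?_⟩
  · have support_subset : Function.support (fun x ↦ √(ρ i x)) ⊆ Function.support (ρ i) :=
      Function.support_comp_subset Real.sqrt_zero _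
    exact (closure_mono support_subset).trans (hρ i)
  · simpa only [ContinuousMap.coe_mk, Real.mul_self_sqrt (ρ.nonneg _ x), finsum_eq_sum_of_fintype]
      using ρ.sum_eq_one (mem_univ x)

theorem continuousAt_smul_of_mem_tsupport {X Y M V : Type*} [TopologicalSpace X]
    [TopologicalSpace Y] [TopologicalSpace M] [Zero M] [TopologicalSpace V] [Zero V]
    [SMulWithZero M V] [ContinuousSMul M V] {s : X → M} (hs : Continuous s) {f : Y → X}
    {g : Y → V} {y : Y} (hf : ContinuousAt f y) (hg : f y ∈ tsupport s → ContinuousAt g y) :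
    ContinuousAt (fun y ↦ s (f y) • g y) y := by
  by_cases hy : f y ∈ tsupport s
  · exact (hs.continuousAt.comp hf).smul (hg hy)
  · refine continuousAt_const (y := (0 : V)) |>.congr ?_
    filter_upwards [hf.eventually (notMem_tsupport_iff_eventuallyEq.1 hy)] with z hz
    rw [hz, Pi.zero_apply, zero_smul]

/-- A fiberwise linear presentation of the bundle `E` as a retract of the trivial bundle `X × V`,
which is the same as a direct sum decomposition of `X × V` with `E` as one summand. -/
structure TrivialBundleRetract (𝕜 : Type*) {X : Type*} (F : Type*) (E : X → Type*) (V : Type*)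
    [Semiring 𝕜] [TopologicalSpace X] [TopologicalSpace (TotalSpace F E)]
    [∀ x, AddCommMonoid (E x)] [∀ x, Module 𝕜 (E x)]
    [TopologicalSpace V] [AddCommMonoid V] [Module 𝕜 V] where
  incl (x : X) : E x →ₗ[𝕜] V
  retr (x : X) : V →ₗ[𝕜] E x
  retr_incl (x : X) (v : E x) : retr x (incl x v) = v
  continuous_incl : Continuous fun z : TotalSpace F E ↦ (z.proj, incl z.proj z.2)
  continuous_retr : Continuous fun z : X × V ↦ TotalSpace.mk' F z.1 (retr z.1 z.2)

namespace TrivialBundleRetract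

section Basic

variable {𝕜 X F V : Type*} {E : X → Type*} [Semiring 𝕜] [TopologicalSpace X]
  [TopologicalSpace (TotalSpace F E)] [∀ x, AddCommMonoid (E x)] [∀ x, Module 𝕜 (E x)]
  [TopologicalSpace V] [AddCommMonoid V] [Module 𝕜 V]

/-- The total space of a retract of `X × V` is the fixed-point set of the idempotent
`incl ∘ retr`. -/
def homeomorphFixedPoints (R : TrivialBundleRetract 𝕜 F E V) :
    TotalSpace F E ≃ₜ {z : X × V // R.incl z.1 (R.retr z.1 z.2) = z.2} where
  toFun z := ⟨(z.proj, R.incl z.proj z.2), congrArg (R.incl z.proj) (R.retr_incl z.proj z.2)⟩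
  invFun z := ⟨z.1.1, R.retr z.1.1 z.1.2⟩
  left_inv z := congrArg (TotalSpace.mk z.proj) (R.retr_incl z.proj z.2)
  right_inv z := Subtype.ext (Prod.ext rfl z.2)
  continuous_toFun := R.continuous_incl.subtype_mk _
  continuous_invFun := R.continuous_retr.comp continuous_subtype_val

/-- Enlarge the ambient trivial bundle along a continuous linear injection with a continuous linear
left inverse. -/
def extend {W : Type*} [TopologicalSpace W] [AddCommMonoid W] [Module 𝕜 W]
    (R : TrivialBundleRetract 𝕜 F E V) (i : V →L[𝕜] W) (r : W →L[𝕜] V)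
    (h : Function.LeftInverse r i) : TrivialBundleRetract 𝕜 F E W where
  incl x := i.toLinearMap ∘ₗ R.incl x
  retr x := R.retr x ∘ₗ r.toLinearMap
  retr_incl x v := by simp [h (R.incl x v), R.retr_incl]
  continuous_incl := (continuous_id.prodMap i.continuous).comp R.continuous_incl
  continuous_retr := R.continuous_retr.comp (continuous_id.prodMap r.continuous)

end Basic

section Matrix

variable {𝕜 X F m : Type*} {E : X → Type*} [CommSemiring 𝕜] [TopologicalSpace 𝕜]
  [TopologicalSpace X] [TopologicalSpace (TotalSpace F E)] [∀ x, AddCommMonoid (E x)]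
  [∀ x, Module 𝕜 (E x)] [Fintype m] [DecidableEq m]

/-- The idempotent `incl ∘ retr` as a continuous matrix-valued function. -/
def toMatrix (R : TrivialBundleRetract 𝕜 F E (m → 𝕜)) : C(X, Matrix m m 𝕜) where
  toFun x := LinearMap.toMatrix' (R.incl x ∘ₗ R.retr x)
  continuous_toFun := continuous_matrix fun i j ↦ by
    have column : Continuous fun x ↦ R.incl x (R.retr x (Pi.single j 1)) :=
      (R.continuous_incl.comp (R.continuous_retr.comp (Continuous.prodMk_left _))).snd
    exact ((continuous_apply i).comp column).congr fun x ↦ by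
      rw [Function.comp_apply, LinearMap.toMatrix'_apply, LinearMap.comp_apply]

theorem toMatrix_mulVec (R : TrivialBundleRetract 𝕜 F E (m → 𝕜)) (x : X) (v : m → 𝕜) :
    R.toMatrix x *ᵥ v = R.incl x (R.retr x v) :=
  LinearMap.toMatrix'_mulVec _ v

theorem isIdempotentElem_toMatrix (R : TrivialBundleRetract 𝕜 F E (m → 𝕜)) (x : X) :
    IsIdempotentElem (R.toMatrix x) :=
  mulVec_injective <| funext fun v ↦ by
    simp only [← mulVec_mulVec, toMatrix_mulVec, R.retr_incl]

end Matrix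

section RangeProjection

variable {𝕜 X F m : Type*} {E : X → Type*} [RCLike 𝕜] [TopologicalSpace X]
  [TopologicalSpace (TotalSpace F E)] [∀ x, AddCommMonoid (E x)] [∀ x, Module 𝕜 (E x)]
  [Fintype m] [DecidableEq m]

/-- The orthogonal projections onto the fibers of a retract of `X × 𝕜ᵐ`. -/
noncomputable def fiberProjection (R : TrivialBundleRetract 𝕜 F E (m → 𝕜)) :
    C(X, Matrix m m 𝕜) where
  toFun x := rangeProjection (R.toMatrix x)
  continuous_toFun := continuous_iff_continuousAt.2 fun x ↦
    (continuousAt_rangeProjection (R.isIdempotentElem_toMatrix x)).comp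
      R.toMatrix.continuous.continuousAt

theorem isStarProjection_fiberProjection (R : TrivialBundleRetract 𝕜 F E (m → 𝕜)) (x : X) :
    IsStarProjection (R.fiberProjection x) :=
  isStarProjection_rangeProjection (R.isIdempotentElem_toMatrix x)

theorem fiberProjection_mulVec_eq_self_iff (R : TrivialBundleRetract 𝕜 F E (m → 𝕜)) (x : X)
    {v : m → 𝕜} : R.fiberProjection x *ᵥ v = v ↔ R.incl x (R.retr x v) = v := by
  rw [← R.toMatrix_mulVec]
  exact rangeProjection_mulVec_eq_self_iff (R.isIdempotentElem_toMatrix x)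

/-- The total space of a retract of `X × 𝕜ᵐ` is the bundle of ranges of `fiberProjection`. -/
noncomputable def homeomorphRange (R : TrivialBundleRetract 𝕜 F E (m → 𝕜)) :
    TotalSpace F E ≃ₜ {z : X × (m → 𝕜) // R.fiberProjection z.1 *ᵥ z.2 = z.2} :=
  R.homeomorphFixedPoints.trans <| (Homeomorph.refl _).subtype fun z ↦
    (R.fiberProjection_mulVec_eq_self_iff z.1).symm

end RangeProjection

end TrivialBundleRetract

section Trivialization

variable {𝕜 X F : Type*} {E : X → Type*} [Semiring 𝕜] [TopologicalSpace X]
  [TopologicalSpace F] [AddCommMonoid F] [Module 𝕜 F]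
  [TopologicalSpace (TotalSpace F E)] [∀ x, AddCommMonoid (E x)] [∀ x, Module 𝕜 (E x)]
  (e : Trivialization F (π F E)) [e.IsLinear 𝕜]

variable (𝕜) in
theorem continuousAt_linearMapAt {z : TotalSpace F E} (hz : z.proj ∈ e.baseSet) :
    ContinuousAt (fun z : TotalSpace F E ↦ e.linearMapAt 𝕜 z.proj z.2) z := by
  have hz' : z ∈ e.source := e.mem_source.2 hz
  refine (e.continuousAt hz').snd.congr ?_
  filter_upwards [e.open_source.mem_nhds hz'] with y hy
  exact (congrFun (e.coe_linearMapAt_of_mem (e.mem_source.1 hy)) y.2).symm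

variable (𝕜) in
theorem continuousAt_symmₗ {z : X × F} (hz : z.1 ∈ e.baseSet) :
    ContinuousAt (fun z : X × F ↦ TotalSpace.mk' F z.1 (e.symmₗ 𝕜 z.1 z.2)) z := by
  have nhds : e.baseSet ×ˢ univ ∈ 𝓝 z :=
    (e.open_baseSet.prod isOpen_univ).mem_nhds ⟨hz, mem_univ _⟩
  refine (e.continuousOn_symm.continuousAt nhds).congr ?_
  filter_upwards [nhds] with y hy
  rw [e.symmₗ_apply hy.1]

end Trivialization

section PatchedTrivializations

variable {𝕜 X F ι : Type*} {E : X → Type*} [CommSemiring 𝕜] [TopologicalSpace 𝕜]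
  [TopologicalSpace X] [TopologicalSpace F] [AddCommMonoid F] [Module 𝕜 F] [ContinuousSMul 𝕜 F]
  [TopologicalSpace (TotalSpace F E)] [∀ x, AddCommMonoid (E x)] [∀ x, Module 𝕜 (E x)]
  {e : ι → Trivialization F (π F E)} [∀ i, (e i).IsLinear 𝕜]
  {s : ι → C(X, 𝕜)}

theorem continuous_smul_linearMapAt (hcover : ⋃ i, (e i).baseSet = univ)
    (hs : ∀ i, tsupport (s i) ⊆ (e i).baseSet) :
    Continuous fun z : TotalSpace F E ↦
      (z.proj, fun i ↦ s i z.proj • (e i).linearMapAt 𝕜 z.proj z.2) := by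
  have continuous_proj : Continuous (π F E) := continuous_iff_continuousAt.2 fun z ↦ by
    obtain ⟨i, hi⟩ := iUnion_eq_univ_iff.1 hcover z.proj
    exact (e i).continuousAt_proj ((e i).mem_source.2 hi)
  refine continuous_proj.prodMk <| continuous_pi fun i ↦ continuous_iff_continuousAt.2 fun z ↦ ?_
  exact continuousAt_smul_of_mem_tsupport (s i).continuous continuous_proj.continuousAt
    fun hz ↦ continuousAt_linearMapAt 𝕜 (e i) (hs i hz)

theorem continuous_sum_smul_symmₗ [Fintype ι] [ContinuousAdd F]
    (hcover : ⋃ i, (e i).baseSet = univ) (hs : ∀ i, tsupport (s i) ⊆ (e i).baseSet) :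
    Continuous fun z : X × (ι → F) ↦
      TotalSpace.mk' F z.1 (∑ i, s i z.1 • (e i).symmₗ 𝕜 z.1 (z.2 i)) := by
  refine continuous_iff_continuousAt.2 fun z ↦ ?_
  obtain ⟨j, hj⟩ := iUnion_eq_univ_iff.1 hcover z.1
  refine ((e j).tendsto_nhds_iff ((e j).mem_source.2 hj)).2 ⟨continuousAt_fst, ?_⟩
  have summand (i : ι) : ContinuousAt (fun z : X × (ι → F) ↦
      s i z.1 • (e j).linearMapAt 𝕜 z.1 ((e i).symmₗ 𝕜 z.1 (z.2 i))) z := by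
    refine continuousAt_smul_of_mem_tsupport (s i).continuous continuousAt_fst fun hz ↦ ?_
    have symm_at : ContinuousAt (fun z : X × (ι → F) ↦
        TotalSpace.mk' F z.1 ((e i).symmₗ 𝕜 z.1 (z.2 i))) z :=
      (continuousAt_symmₗ 𝕜 (e i) (z := (z.1, z.2 i)) (hs i hz)).comp
        (f := fun z : X × (ι → F) ↦ (z.1, z.2 i)) (by fun_prop)
    exact (continuousAt_linearMapAt 𝕜 (e j) hj).comp symm_at
  refine ContinuousAt.congr (tendsto_finsetSum Finset.univ fun i _ ↦ summand i) ?_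
  filter_upwards [continuousAt_fst.eventually ((e j).open_baseSet.mem_nhds hj)] with y hy
  refine Eq.trans ?_ (congrFun ((e j).coe_linearMapAt_of_mem (R := 𝕜) hy) _)
  simp only [map_sum, map_smul]

/-- The retract `v ↦ (sᵢ • eᵢ v)ᵢ`, `w ↦ ∑ sᵢ • eᵢ⁻¹ wᵢ` obtained from linear local trivializations
`eᵢ` and a partition of unity into squares `sᵢ²`. -/
noncomputable def TrivialBundleRetract.ofTrivializations [Fintype ι] [ContinuousAdd F]
    (hcover : ⋃ i, (e i).baseSet = univ) (hs : ∀ i, tsupport (s i) ⊆ (e i).baseSet)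
    (hsum : ∀ x, ∑ i, s i x * s i x = 1) : TrivialBundleRetract 𝕜 F E (ι → F) where
  incl x := LinearMap.pi fun i ↦ s i x • (e i).linearMapAt 𝕜 x
  retr x := ∑ i, s i x • (e i).symmₗ 𝕜 x ∘ₗ LinearMap.proj i
  retr_incl x v := by
    have summand (i : ι) :
        s i x • (e i).symmₗ 𝕜 x (s i x • (e i).linearMapAt 𝕜 x v) = (s i x * s i x) • v := by
      by_cases hx : x ∈ (e i).baseSet
      · rw [map_smul, (e i).symmₗ_linearMapAt hx, smul_smul]
      · rw [image_eq_zero_of_notMem_tsupport fun h ↦ hx (hs i h), zero_smul, zero_mul, zero_smul]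
    simp only [LinearMap.sum_apply, LinearMap.smul_apply, LinearMap.comp_apply,
      LinearMap.proj_apply, LinearMap.pi_apply, summand, ← Finset.sum_smul, hsum, one_smul]
  continuous_incl := continuous_smul_linearMapAt hcover hs
  continuous_retr := by
    simpa only [LinearMap.sum_apply, LinearMap.smul_apply, LinearMap.comp_apply,
      LinearMap.proj_apply] using continuous_sum_smul_symmₗ hcover hs

end PatchedTrivializations

theorem exists_trivialBundleRetract {𝕜 X F : Type*} {E : X → Type*} [RCLike 𝕜]
    [TopologicalSpace X] [NormalSpace X] [TopologicalSpace F] [AddCommMonoid F] [Module 𝕜 F]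
    [ContinuousAdd F] [ContinuousSMul 𝕜 F]
    [TopologicalSpace (TotalSpace F E)] [∀ x, AddCommMonoid (E x)] [∀ x, Module 𝕜 (E x)]
    {ι : Type*} [Finite ι] (e : ι → Trivialization F (π F E)) [∀ i, (e i).IsLinear 𝕜]
    (hcover : ⋃ i, (e i).baseSet = univ) :
    Nonempty (TrivialBundleRetract 𝕜 F E (ι → F)) := by
  have := Fintype.ofFinite ι
  obtain ⟨s, hs, hsum⟩ :=
    exists_continuous_sum_mul_self_eq_one (fun i ↦ (e i).open_baseSet) hcover
  let t (i : ι) : C(X, 𝕜) := ⟨fun x ↦ (s i x : 𝕜), RCLike.continuous_ofReal.comp (s i).continuous⟩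
  have ht (i : ι) : tsupport (t i) ⊆ (e i).baseSet :=
    (closure_mono (Function.support_comp_subset RCLike.ofReal_zero (s i))).trans (hs i)
  exact ⟨.ofTrivializations hcover ht fun x ↦ by
    simpa only [t, ContinuousMap.coe_mk, RCLike.ofReal_sum, RCLike.ofReal_mul, RCLike.ofReal_one]
      using congrArg (RCLike.ofReal (K := 𝕜)) (hsum x)⟩

theorem TrivialBundleRetract.exists_fin {𝕜 X F V : Type*} {E : X → Type*}
    [NontriviallyNormedField 𝕜] [CompleteSpace 𝕜] [TopologicalSpace X]
    [TopologicalSpace (TotalSpace F E)] [∀ x, AddCommMonoid (E x)] [∀ x, Module 𝕜 (E x)]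
    [TopologicalSpace V] [AddCommGroup V] [IsTopologicalAddGroup V] [T2Space V] [Module 𝕜 V]
    [ContinuousSMul 𝕜 V] [FiniteDimensional 𝕜 V] (R : TrivialBundleRetract 𝕜 F E V) :
    ∃ N : ℕ, 1 ≤ N ∧ Nonempty (TrivialBundleRetract 𝕜 F E (Fin N → 𝕜)) := by
  let coords : (V × 𝕜) ≃L[𝕜] (Fin (Module.finrank 𝕜 V + 1) → 𝕜) :=
    .ofFinrankEq (by simp)
  refine ⟨Module.finrank 𝕜 V + 1, Nat.le_add_left _ _,
    ⟨R.extend (coords.toContinuousLinearMap ∘L .inl 𝕜 V 𝕜)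
      (.fst 𝕜 V 𝕜 ∘L coords.symm.toContinuousLinearMap) fun v ↦ ?_⟩⟩
  simp

theorem vector_bundle_iso_range_of_projection_general
    {𝕜 X : Type*} [RCLike 𝕜] [TopologicalSpace X] [NormalSpace X]
    (F : Type*) [TopologicalSpace F] [AddCommGroup F] [IsTopologicalAddGroup F] [T2Space F]
    [Module 𝕜 F] [ContinuousSMul 𝕜 F] [FiniteDimensional 𝕜 F]
    (E : X → Type*) [TopologicalSpace (TotalSpace F E)]
    [∀ x, AddCommMonoid (E x)] [∀ x, Module 𝕜 (E x)]
    {ι : Type*} [Finite ι] (e : ι → Trivialization F (π F E)) [∀ i, (e i).IsLinear 𝕜]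
    (hcover : ⋃ i, (e i).baseSet = univ) :
    ∃ N : ℕ, 1 ≤ N ∧
      ∃ p : C(X, Matrix (Fin N) (Fin N) 𝕜), (∀ x, IsStarProjection (p x)) ∧
        ∃ (φ : ∀ x, E x →ₗ[𝕜] (Fin N → 𝕜))
          (h : TotalSpace F E ≃ₜ {z : X × (Fin N → 𝕜) // p z.1 *ᵥ z.2 = z.2}),
          ∀ z : TotalSpace F E, (h z : X × (Fin N → 𝕜)) = (z.proj, φ z.proj z.2) := by
  obtain ⟨R⟩ := exists_trivialBundleRetract (𝕜 := 𝕜) e hcover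
  obtain ⟨N, hN, ⟨R'⟩⟩ := R.exists_fin
  exact ⟨N, hN, R'.fiberProjection, R'.isStarProjection_fiberProjection, R'.incl,
    R'.homeomorphRange, fun _ ↦ rfl⟩

theorem exists_finite_iUnion_baseSet_eq_univ {X F : Type*} [TopologicalSpace X] [CompactSpace X]
    [TopologicalSpace F] (E : X → Type*) [TopologicalSpace (TotalSpace F E)]
    [∀ x, TopologicalSpace (E x)] [FiberBundle F E] :
    ∃ t : Finset X, ⋃ x : t, (trivializationAt F E (x : X)).baseSet = univ := by
  obtain ⟨t, ht⟩ := CompactSpace.elim_nhds_subcover (fun x ↦ (trivializationAt F E x).baseSet)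
    fun x ↦ (trivializationAt F E x).open_baseSet.mem_nhds
      (FiberBundle.mem_baseSet_trivializationAt' x)
  exact ⟨t, (iUnion_subtype (· ∈ t) fun x ↦ (trivializationAt F E (x : X)).baseSet).trans ht⟩

/-- surjectivity part of Swan's theorem: a locally trivial real vector
bundle with finite-dimensional fibers over a compact Hausdorff base is fiberwise-linearly
homeomorphic to a bundle of the form `E_p = {(x,v) ∈ X × ℝᴺ : p(x)v = v}` for a
continuous projection-valued map `p : X → M_N(ℝ)`. -/
theorem vector_bundle_iso_range_of_projection
    {X : Type*} [TopologicalSpace X] [CompactSpace X] [T2Space X]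
    (F : Type*) [NormedAddCommGroup F] [NormedSpace ℝ F] [FiniteDimensional ℝ F]
    (E : X → Type*) [TopologicalSpace (TotalSpace F E)]
    [∀ x, TopologicalSpace (E x)] [∀ x, AddCommGroup (E x)] [∀ x, Module ℝ (E x)]
    [FiberBundle F E] [VectorBundle ℝ F E] :
    ∃ N : ℕ, 1 ≤ N ∧
      ∃ p : C(X, Matrix (Fin N) (Fin N) ℝ),
        (∀ x, p x * p x = p x ∧ (p x)ᵀ = p x) ∧
        ∃ h : TotalSpace F E ≃ₜ {z : X × (Fin N → ℝ) // (p z.1).mulVec z.2 = z.2},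
          (∀ z : TotalSpace F E, (h z : X × (Fin N → ℝ)).1 = z.proj) ∧
          (∀ (x : X) (v w : E x),
            (h (TotalSpace.mk x (v + w)) : X × (Fin N → ℝ)).2 =
              (h (TotalSpace.mk x v) : X × (Fin N → ℝ)).2 +
                (h (TotalSpace.mk x w) : X × (Fin N → ℝ)).2) ∧
          (∀ (x : X) (v : E x) (r : ℝ),
            (h (TotalSpace.mk x (r • v)) : X × (Fin N → ℝ)).2 =
              r • (h (TotalSpace.mk x v) : X × (Fin N → ℝ)).2) := by
  obtain ⟨t, ht⟩ := exists_finite_iUnion_baseSet_eq_univ (F := F) E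
  obtain ⟨N, hN, p, hp, φ, h, hφ⟩ := vector_bundle_iso_range_of_projection_general (𝕜 := ℝ) F E
    (fun x : t ↦ trivializationAt F E (x : X)) ht
  refine ⟨N, hN, p, fun x ↦ ⟨(hp x).isIdempotentElem, ?_⟩, h, fun z ↦ ?_, ?_, ?_⟩
  · rw [← conjTranspose_eq_transpose_of_trivial]
    exact (hp x).isSelfAdjoint
  · rw [hφ]
  · simp only [hφ, map_add, implies_true]
  · simp only [hφ, map_smul, implies_true]
end

section
/- Let Q_k denote the negative-definite quadratic form Q_k(x) = −(x₁² + ⋯ + x_k²) on ℝᵏ, so that the Clifford algebra Cℓ_k = CliffordAlgebra(Q_k) is the real algebra generated by e₁,…,e_k with e_i² = −1 and e_i e_j + e_j e_i = 0 for i ≠ j. Then for every k ≥ 0 there is an isomorphism of ℝ-algebras Cℓ_{k+8} ≅ Cℓ_k ⊗ℝ M₁₆(ℝ). -/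
open scoped TensorProduct

/-- The negative-definite quadratic form `Q_k(x) = −(x₁² + ⋯ + x_k²)` on `ℝᵏ`.  The
Clifford algebra `CliffordAlgebra (negDefiniteForm k)` is then the real algebra generated
by `e₁, …, e_k` with `eᵢ² = −1` and `eᵢeⱼ + eⱼeᵢ = 0` for `i ≠ j`. -/
noncomputable def negDefiniteForm (k : ℕ) : QuadraticForm ℝ (Fin k → ℝ) :=
  QuadraticMap.weightedSumSquares ℝ (fun _ : Fin k => (-1 : ℝ))

/-! If `ω` is an even element of `Cℓ(Q₂)` that anticommutes with every vector and has square a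
unit `u`, then `v ↦ v ω` untwists the graded tensor product: `Cℓ(Q₁ ⊥ Q₂) ≅ Cℓ(u Q₁) ⊗ Cℓ(Q₂)`. For
`Q₂ = ⟨-1, -1⟩` and `ω = e₁e₂` this negates `Q₁`, so two negative-definite planes split off from `Q`
as `T = (1, 1) ⊗ (-1, -1)`, a tensor product of quaternion algebras, and four planes split off as
`T ⊗ T`. Since `(1, ±1)` is `M₂` and `(-1, -1) ⊗ (-1, -1) ≅ (1, -1) ⊗ (1, -1)`, this is `M₁₆`. -/

namespace CliffordPeriodicity

open CliffordAlgebra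
open CliffordAlgebraQuaternion renaming Q → binaryForm
open QuadraticMap (IsometryEquiv weightedSumSquares)
open QuadraticMap.Isometry (inl inr)
open scoped Quaternion

noncomputable section

section Orthogonal

variable {R M₁ M₂ : Type*} [CommRing R] [AddCommGroup M₁] [Module R M₁] [AddCommGroup M₂]
  [Module R M₂] {Q₁ Q₁' : QuadraticForm R M₁} {Q₂ : QuadraticForm R M₂}

/-- `ω` behaves like the volume element `e₁ ⋯ e₂ₘ` of an orthogonal basis: it is even,
anticommutes with every vector, and squares to the scalar `u`. -/
structure IsVolumeElement (Q : QuadraticForm R M₂) (ω : CliffordAlgebra Q) (u : R) : Prop where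
  mem_even : ω ∈ evenOdd Q 0
  ι_mul (v : M₂) : ι Q v * ω = -(ω * ι Q v)
  mul_self : ω * ω = algebraMap R _ u

lemma commute_map_inl_ι_map_inr_of_mem_even {ω : CliffordAlgebra Q₂} (hω : ω ∈ evenOdd Q₂ 0)
    (v : M₁) : Commute (map (inl Q₁ Q₂) (ι Q₁ v)) (map (inr Q₁ Q₂) ω) :=
  commute_map_mul_map_of_isOrtho_of_mem_evenOdd_zero_right _ _
    (fun v w => QuadraticMap.IsOrtho.inl_inr v w) _ _ (ι_mem_evenOdd_one Q₁ v) hω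

lemma map_inr_ι_mul_map_inl_ι (v : M₁) (w : M₂) :
    map (inr Q₁ Q₂) (ι Q₂ w) * map (inl Q₁ Q₂) (ι Q₁ v) =
      -(map (inl Q₁ Q₂) (ι Q₁ v) * map (inr Q₁ Q₂) (ι Q₂ w)) := by
  simp only [map_apply_ι]
  exact ι_mul_ι_comm_of_isOrtho (QuadraticMap.IsOrtho.inr_inl v w)

namespace IsVolumeElement

variable {ω : CliffordAlgebra Q₂} {u : Rˣ}

lemma tmul_add_one_tmul_mul_self (hω : IsVolumeElement Q₂ ω (u : R))
    (hQ : ∀ v, Q₁' v = u * Q₁ v) (v : M₁) (w : M₂) :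
    (ι Q₁' v ⊗ₜ[R] ((↑u⁻¹ : R) • ω) + 1 ⊗ₜ[R] ι Q₂ w) *
        (ι Q₁' v ⊗ₜ[R] ((↑u⁻¹ : R) • ω) + 1 ⊗ₜ[R] ι Q₂ w) =
      algebraMap R _ (Q₁.prod Q₂ (v, w)) := by
  have hv : ι Q₁' v ⊗ₜ[R] ((↑u⁻¹ : R) • ω) * ι Q₁' v ⊗ₜ[R] ((↑u⁻¹ : R) • ω) =
      algebraMap R _ (Q₁ v) := by
    rw [Algebra.TensorProduct.tmul_mul_tmul, ι_sq_scalar, smul_mul_smul_comm, hω.mul_self, hQ]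
    simp [Algebra.algebraMap_eq_smul_one, TensorProduct.smul_tmul', smul_smul,
      Algebra.TensorProduct.one_def, mul_comm, mul_left_comm]
  have hw : (1 : CliffordAlgebra Q₁') ⊗ₜ[R] ι Q₂ w * 1 ⊗ₜ[R] ι Q₂ w = algebraMap R _ (Q₂ w) := by
    rw [Algebra.TensorProduct.tmul_mul_tmul, one_mul, ι_sq_scalar,
      Algebra.TensorProduct.algebraMap_apply']
  have anticomm : (1 : CliffordAlgebra Q₁') ⊗ₜ[R] ι Q₂ w * ι Q₁' v ⊗ₜ[R] ((↑u⁻¹ : R) • ω) =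
      -(ι Q₁' v ⊗ₜ[R] ((↑u⁻¹ : R) • ω) * 1 ⊗ₜ[R] ι Q₂ w) := by
    rw [Algebra.TensorProduct.tmul_mul_tmul, Algebra.TensorProduct.tmul_mul_tmul, mul_smul_comm,
      smul_mul_assoc, hω.ι_mul, smul_neg, TensorProduct.tmul_neg, one_mul, mul_one]
  rw [mul_add, add_mul, add_mul, hv, hw, anticomm, QuadraticMap.prod_apply, map_add]
  abel

variable (hω : IsVolumeElement Q₂ ω (u : R)) (hQ : ∀ v, Q₁' v = u * Q₁ v)

/-- The homomorphism `Cℓ(Q₁ ⊥ Q₂) → Cℓ(u Q₁) ⊗ Cℓ(Q₂)` given on vectors by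
`(v, w) ↦ v ⊗ u⁻¹ω + 1 ⊗ w`; the factor `ω` makes the images of `v` and `w` anticommute. -/
def toTensor : CliffordAlgebra (Q₁.prod Q₂) →ₐ[R] CliffordAlgebra Q₁' ⊗[R] CliffordAlgebra Q₂ :=
  lift (Q₁.prod Q₂)
    ⟨((TensorProduct.mk R _ _).flip ((↑u⁻¹ : R) • ω) ∘ₗ ι Q₁').coprod
      (TensorProduct.mk R _ _ 1 ∘ₗ ι Q₂),
      fun x => hω.tmul_add_one_tmul_mul_self hQ x.1 x.2⟩

lemma toTensor_ι (x : M₁ × M₂) :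
    hω.toTensor hQ (ι (Q₁.prod Q₂) x) = ι Q₁' x.1 ⊗ₜ ((↑u⁻¹ : R) • ω) + 1 ⊗ₜ ι Q₂ x.2 :=
  lift_ι_apply _ _ x

lemma toTensor_map_inl_ι (v : M₁) :
    hω.toTensor hQ (map (inl Q₁ Q₂) (ι Q₁ v)) = ι Q₁' v ⊗ₜ ((↑u⁻¹ : R) • ω) := by
  simp [toTensor_ι]

lemma toTensor_map_inr (y : CliffordAlgebra Q₂) :
    hω.toTensor hQ (map (inr Q₁ Q₂) y) = 1 ⊗ₜ y := by
  have : (hω.toTensor hQ).comp (map (inr Q₁ Q₂)) = Algebra.TensorProduct.includeRight := by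
    ext w
    simp [toTensor_ι]
  exact DFunLike.congr_fun this y

/-- The homomorphism `Cℓ(u Q₁) → Cℓ(Q₁ ⊥ Q₂)` given on vectors by `v ↦ v ω`. -/
def twist : CliffordAlgebra Q₁' →ₐ[R] CliffordAlgebra (Q₁.prod Q₂) :=
  lift Q₁' ⟨LinearMap.mulRight R (map (inr Q₁ Q₂) ω) ∘ₗ
    (map (inl Q₁ Q₂)).toLinearMap ∘ₗ ι Q₁, fun v => by
      simp only [LinearMap.comp_apply, LinearMap.mulRight_apply, AlgHom.toLinearMap_apply]
      rw [(commute_map_inl_ι_map_inr_of_mem_even hω.mem_even v).symm.mul_mul_mul_comm,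
        ← map_mul (map (inl Q₁ Q₂)), ← map_mul (map (inr Q₁ Q₂)), ι_sq_scalar, hω.mul_self,
        AlgHom.commutes, AlgHom.commutes, ← map_mul, hQ, mul_comm]⟩

lemma twist_ι (v : M₁) :
    hω.twist hQ (ι Q₁' v) = map (inl Q₁ Q₂) (ι Q₁ v) * map (inr Q₁ Q₂) ω := by
  rw [twist, lift_ι_apply]
  rfl

lemma commute_twist_ι_map_inr_ι (v : M₁) (w : M₂) :
    Commute (hω.twist hQ (ι Q₁' v)) (map (inr Q₁ Q₂) (ι Q₂ w)) := by
  have anticomm := congrArg (map (inr Q₁ Q₂)) (hω.ι_mul w)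
  rw [map_mul, map_neg, map_mul] at anticomm
  rw [twist_ι, commute_iff_eq, ← mul_assoc, map_inr_ι_mul_map_inl_ι, neg_mul, mul_assoc,
    mul_assoc, anticomm, mul_neg, neg_neg]

lemma commute_twist_map_inr (x : CliffordAlgebra Q₁') (y : CliffordAlgebra Q₂) :
    Commute (hω.twist hQ x) (map (inr Q₁ Q₂) y) := by
  induction x using CliffordAlgebra.induction with
  | algebraMap r => rw [AlgHom.commutes]; exact Algebra.commutes _ _
  | mul a b ha hb => rw [map_mul]; exact ha.mul_left hb
  | add a b ha hb => rw [map_add]; exact ha.add_left hb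
  | ι v =>
    induction y using CliffordAlgebra.induction with
    | algebraMap r => rw [AlgHom.commutes]; exact (Algebra.commutes _ _).symm
    | mul a b ha hb => rw [map_mul]; exact ha.mul_right hb
    | add a b ha hb => rw [map_add]; exact ha.add_right hb
    | ι w => exact hω.commute_twist_ι_map_inr_ι hQ v w

/-- The homomorphism `Cℓ(u Q₁) ⊗ Cℓ(Q₂) → Cℓ(Q₁ ⊥ Q₂)` which is `twist` on the first factor
and the inclusion on the second. -/
def ofTensor : CliffordAlgebra Q₁' ⊗[R] CliffordAlgebra Q₂ →ₐ[R] CliffordAlgebra (Q₁.prod Q₂) :=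
  Algebra.TensorProduct.lift (hω.twist hQ) (map (inr Q₁ Q₂)) (hω.commute_twist_map_inr hQ)

lemma toTensor_comp_ofTensor : (hω.toTensor hQ).comp (hω.ofTensor hQ) = AlgHom.id R _ := by
  ext v
  · suffices ι Q₁' v ⊗ₜ[R] ((↑u⁻¹ : R) • (ω * ω)) = ι Q₁' v ⊗ₜ[R] 1 by
      simpa [ofTensor, twist_ι, toTensor_map_inl_ι, toTensor_map_inr,
        Algebra.TensorProduct.tmul_mul_tmul, -map_apply_ι] using this
    rw [hω.mul_self, Algebra.algebraMap_eq_smul_one, smul_smul, Units.inv_mul,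
      one_smul]
  · simp [ofTensor, toTensor_map_inr, -map_apply_ι]

lemma ofTensor_comp_toTensor : (hω.ofTensor hQ).comp (hω.toTensor hQ) = AlgHom.id R _ := by
  ext x
  · suffices ι (Q₁.prod Q₂) (x, 0) * map (inr Q₁ Q₂) ((↑u⁻¹ : R) • (ω * ω)) =
        ι (Q₁.prod Q₂) (x, 0) by
      simpa [ofTensor, toTensor_ι, twist_ι, mul_assoc] using this
    rw [hω.mul_self, Algebra.algebraMap_eq_smul_one, smul_smul, Units.inv_mul,
      one_smul, map_one, mul_one]
  · simp [ofTensor, toTensor_ι]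

/-- The isomorphism `Cℓ(Q₁ ⊥ Q₂) ≅ Cℓ(u Q₁) ⊗ Cℓ(Q₂)` defined by a volume element of `Q₂` with
square `u`. The form `u Q₁` enters as any `Q₁'` with the values `u Q₁ v`, so that no transport
along an equality of forms is needed. -/
def prodEquiv :
    CliffordAlgebra (Q₁.prod Q₂) ≃ₐ[R] CliffordAlgebra Q₁' ⊗[R] CliffordAlgebra Q₂ :=
  AlgEquiv.ofAlgHom (hω.toTensor hQ) (hω.ofTensor hQ) (hω.toTensor_comp_ofTensor hQ)
    (hω.ofTensor_comp_toTensor hQ)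

end IsVolumeElement

end Orthogonal

section Quaternion

variable {R M : Type*} [CommRing R] [AddCommGroup M] [Module R M]

lemma isVolumeElement_ι_mul_ι (a b : R) :
    IsVolumeElement (binaryForm a b)
      (ι (binaryForm a b) (1, 0) * ι (binaryForm a b) (0, 1))
      (-(a * b)) where
  mem_even := ι_mul_ι_mem_evenOdd_zero _ _ _
  ι_mul v := CliffordAlgebraQuaternion.equiv.injective <| by
    ext <;> simp
  mul_self := CliffordAlgebraQuaternion.equiv.injective <| by
    rw [AlgEquiv.commutes]
    ext <;> simp

/-- The isomorphism `Cℓ(Q ⊥ ⟨a, b⟩) ≅ Cℓ(-ab Q) ⊗ (a, b)`, where `(a, b)` is the quaternion algebra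
with `i² = a` and `j² = b`. The unit `u` and the form `Q'` stand for `-ab` and `-ab Q`. -/
def prodQuaternionEquiv {Q Q' : QuadraticForm R M} {a b : R} (u : Rˣ) (hu : u = -(a * b))
    (hQ : ∀ v, Q' v = u * Q v) :
    CliffordAlgebra (Q.prod (binaryForm a b)) ≃ₐ[R]
      CliffordAlgebra Q' ⊗[R] ℍ[R, a, 0, b] :=
  ((hu ▸ isVolumeElement_ι_mul_ι a b : IsVolumeElement _ _ (u : R)).prodEquiv hQ).trans
    (Algebra.TensorProduct.congr AlgEquiv.refl CliffordAlgebraQuaternion.equiv)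

/-- The isomorphism `(-1, -1) ⊗ (-1, -1) ≅ (1, -1) ⊗ (1, -1)`: both sides are the Clifford algebra
of `⟨1, 1, -1, -1⟩`, split into planes as `⟨1, 1⟩ ⊥ ⟨-1, -1⟩` and as `⟨1, -1⟩ ⊥ ⟨1, -1⟩`. -/
def quaternionTensorSelfEquiv :
    ℍ[R, -1, 0, -1] ⊗[R] ℍ[R, -1, 0, -1] ≃ₐ[R] ℍ[R, 1, 0, -1] ⊗[R] ℍ[R, 1, 0, -1] :=
  let left : CliffordAlgebra ((binaryForm (1 : R) 1).prod
      (binaryForm (-1) (-1))) ≃ₐ[R] ℍ[R, -1, 0, -1] ⊗[R] ℍ[R, -1, 0, -1] :=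
    (prodQuaternionEquiv (Q' := binaryForm (-1) (-1)) (-1) (by simp)
      (by simp [add_comm])).trans
      (Algebra.TensorProduct.congr CliffordAlgebraQuaternion.equiv AlgEquiv.refl)
  let right : CliffordAlgebra ((binaryForm (1 : R) (-1)).prod
      (binaryForm 1 (-1))) ≃ₐ[R] ℍ[R, 1, 0, -1] ⊗[R] ℍ[R, 1, 0, -1] :=
    (prodQuaternionEquiv (Q' := binaryForm 1 (-1)) 1 (by simp) (by simp)).trans
      (Algebra.TensorProduct.congr CliffordAlgebraQuaternion.equiv AlgEquiv.refl)
  left.symm.trans ((equivOfIsometry (IsometryEquiv.prodProdProdComm _ _ _ _)).trans right)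

/-- The isomorphism `Cℓ(Q ⊥ ⟨-1, -1⟩ ⊥ ⟨-1, -1⟩) ≅ Cℓ(Q) ⊗ (1, 1) ⊗ (-1, -1)`: splitting off the
second plane negates the form that remains, and splitting off the first restores `Q`. -/
def prodTwoQuaternionEquiv (Q : QuadraticForm R M) :
    CliffordAlgebra ((Q.prod (binaryForm (-1) (-1))).prod
      (binaryForm (-1) (-1))) ≃ₐ[R]
      CliffordAlgebra Q ⊗[R] (ℍ[R, 1, 0, 1] ⊗[R] ℍ[R, -1, 0, -1]) :=
  ((prodQuaternionEquiv (Q' := (-Q).prod (binaryForm 1 1)) (-1) (by simp)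
    (by simp [add_comm])).trans
      (Algebra.TensorProduct.congr (prodQuaternionEquiv (Q' := Q) (-1) (by simp) (by simp))
        AlgEquiv.refl)).trans
    (Algebra.TensorProduct.assoc R R R _ _ _)

/-- The splitting `(1, b) ≅ M₂(R)`, sending `i` to `diag(1, -1)` and `j` to `!![0, b; 1, 0]`. -/
def splitQuaternionEquiv [Invertible (2 : R)] (b : R) [Invertible b] :
    ℍ[R, 1, 0, b] ≃ₐ[R] Matrix (Fin 2) (Fin 2) R where
  toFun q := !![q.re + q.imI, b * (q.imJ + q.imK); q.imJ - q.imK, q.re - q.imI]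
  invFun m := ⟨⅟2 * (m 0 0 + m 1 1), ⅟2 * (m 0 0 - m 1 1), ⅟2 * (⅟b * m 0 1 + m 1 0),
    ⅟2 * (⅟b * m 0 1 - m 1 0)⟩
  left_inv q := by
    have h2 := invOf_mul_self (2 : R)
    ext <;> simp only [Matrix.of_apply, Matrix.cons_val, invOf_mul_cancel_left'] <;> grind
  right_inv m := by
    have h2 := invOf_mul_self (2 : R)
    have hb := invOf_mul_self b
    rw [Matrix.eta_fin_two m]
    simp only [Matrix.of_apply, Matrix.cons_val]
    congr! 3 <;> grind
  map_mul' p q := by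
    simp only [QuaternionAlgebra.re_mul, QuaternionAlgebra.imI_mul, QuaternionAlgebra.imJ_mul,
      QuaternionAlgebra.imK_mul, Matrix.mul_fin_two]
    ring_nf
  map_add' p q := by
    simp only [QuaternionAlgebra.re_add, QuaternionAlgebra.imI_add, QuaternionAlgebra.imJ_add,
      QuaternionAlgebra.imK_add, Matrix.of_add_of, Matrix.cons_add_cons, Matrix.empty_add_empty]
    ring_nf
  commutes' r := by
    ext i j
    fin_cases i <;> fin_cases j <;> simp [Matrix.algebraMap_matrix_apply]

end Quaternion

section Matrix

variable (R : Type*) [CommRing R]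

/-- The Kronecker product isomorphism `M_m(R) ⊗ M_n(R) ≅ M_mn(R)`. -/
def matrixTensorEquiv (m n : ℕ) :
    Matrix (Fin m) (Fin m) R ⊗[R] Matrix (Fin n) (Fin n) R ≃ₐ[R]
      Matrix (Fin (m * n)) (Fin (m * n)) R :=
  (Matrix.kroneckerAlgEquiv (Fin m) (Fin n) R).trans (Matrix.reindexAlgEquiv R R finProdFinEquiv)

variable [Invertible (2 : R)]

/-- The splitting `(1, b) ⊗ (1, b) ≅ M₄(R)`. -/
def splitQuaternionTensorSelfEquiv (b : R) [Invertible b] :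
    ℍ[R, 1, 0, b] ⊗[R] ℍ[R, 1, 0, b] ≃ₐ[R] Matrix (Fin 4) (Fin 4) R :=
  (Algebra.TensorProduct.congr (splitQuaternionEquiv b) (splitQuaternionEquiv b)).trans
    (matrixTensorEquiv R 2 2)

/-- The splitting of the tensor square of `(1, 1) ⊗ (-1, -1)` as `M₁₆(R)`. -/
def quaternionTensorEquiv :
    (ℍ[R, 1, 0, 1] ⊗[R] ℍ[R, -1, 0, -1]) ⊗[R] (ℍ[R, 1, 0, 1] ⊗[R] ℍ[R, -1, 0, -1]) ≃ₐ[R]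
      Matrix (Fin 16) (Fin 16) R :=
  letI : Invertible (1 : R) := invertibleOne
  letI : Invertible (-1 : R) := invertibleNeg 1
  (Algebra.TensorProduct.tensorTensorTensorComm R R R R _ _ _ _).trans <|
    (Algebra.TensorProduct.congr (splitQuaternionTensorSelfEquiv R 1)
      (quaternionTensorSelfEquiv.trans (splitQuaternionTensorSelfEquiv R (-1)))).trans
    (matrixTensorEquiv R 4 4)

end Matrix

section SumSquares

variable {R M M₁ M₂ : Type*} [CommRing R] [AddCommGroup M] [Module R M] [AddCommGroup M₁]
  [Module R M₁] [AddCommGroup M₂] [Module R M₂]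

/-- Associativity of the orthogonal sum of quadratic forms. -/
def isometryProdAssoc (Q : QuadraticForm R M) (Q₁ : QuadraticForm R M₁) (Q₂ : QuadraticForm R M₂) :
    ((Q.prod Q₁).prod Q₂).IsometryEquiv (Q.prod (Q₁.prod Q₂)) where
  __ := LinearEquiv.prodAssoc R M M₁ M₂
  map_app' _ := (add_assoc _ _ _).symm

/-- The isometry splitting a diagonal form into its first `m` and last `n` variables. -/
def weightedSumSquaresFinAdd {m n : ℕ} (w : Fin (m + n) → R) :
    (weightedSumSquares R w).IsometryEquiv
      ((weightedSumSquares R (w ∘ Fin.castAdd n)).prod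
        (weightedSumSquares R (w ∘ Fin.natAdd m))) where
  __ := (Fin.appendEquiv m n).symm
  map_add' _ _ := rfl
  map_smul' _ _ := rfl
  map_app' x := by
    simp [QuadraticMap.weightedSumSquares_apply, Fin.sum_univ_add]

/-- The isometry between the two encodings of the diagonal binary form `⟨w₀, w₁⟩`, on `Fin 2 → R`
and on `R × R`. -/
def weightedSumSquaresFinTwo (w : Fin 2 → R) :
    (weightedSumSquares R w).IsometryEquiv (binaryForm (w 0) (w 1)) where
  __ := LinearEquiv.finTwoArrow R R
  map_app' x := by
    simp [QuadraticMap.weightedSumSquares_apply]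

/-- Splitting off four negative squares: `Cℓ(Q ⊥ 4⟨-1⟩) ≅ Cℓ(Q) ⊗ (1, 1) ⊗ (-1, -1)`. -/
def prodFourEquiv (Q : QuadraticForm R M) :
    CliffordAlgebra (Q.prod (weightedSumSquares R fun _ : Fin 4 => (-1 : R))) ≃ₐ[R]
      CliffordAlgebra Q ⊗[R] (ℍ[R, 1, 0, 1] ⊗[R] ℍ[R, -1, 0, -1]) :=
  let twoTwo : (weightedSumSquares R fun _ : Fin 4 => (-1 : R)).IsometryEquiv
      ((binaryForm (-1) (-1)).prod (binaryForm (-1) (-1))) :=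
    (weightedSumSquaresFinAdd (m := 2) (n := 2) _).trans
      (.prod (weightedSumSquaresFinTwo _) (weightedSumSquaresFinTwo _))
  (equivOfIsometry ((IsometryEquiv.prod (.refl Q) twoTwo).trans
    (isometryProdAssoc _ _ _).symm)).trans (prodTwoQuaternionEquiv Q)

/-- Eightfold periodicity `Cℓ(Q ⊥ 8⟨-1⟩) ≅ Cℓ(Q) ⊗ M₁₆(R)`. -/
def prodEightEquiv [Invertible (2 : R)] (Q : QuadraticForm R M) :
    CliffordAlgebra (Q.prod (weightedSumSquares R fun _ : Fin 8 => (-1 : R))) ≃ₐ[R]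
      CliffordAlgebra Q ⊗[R] Matrix (Fin 16) (Fin 16) R :=
  let fourFour : (Q.prod (weightedSumSquares R fun _ : Fin 8 => (-1 : R))).IsometryEquiv
      ((Q.prod (weightedSumSquares R fun _ : Fin 4 => (-1 : R))).prod
        (weightedSumSquares R fun _ : Fin 4 => (-1 : R))) :=
    (IsometryEquiv.prod (.refl Q) (weightedSumSquaresFinAdd (m := 4) (n := 4) _)).trans
      (isometryProdAssoc _ _ _).symm
  (equivOfIsometry fourFour).trans <| (prodFourEquiv _).trans <|
    (Algebra.TensorProduct.congr (prodFourEquiv Q) AlgEquiv.refl).trans <|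
    (Algebra.TensorProduct.assoc R R R _ _ _).trans <|
    Algebra.TensorProduct.congr AlgEquiv.refl (quaternionTensorEquiv R)

end SumSquares

end

end CliffordPeriodicity

theorem real_clifford_periodicity_general {R M : Type*} [CommRing R] [Invertible (2 : R)]
    [AddCommGroup M] [Module R M] (Q : QuadraticForm R M) :
    Nonempty (CliffordAlgebra
      (Q.prod (QuadraticMap.weightedSumSquares R fun _ : Fin 8 => (-1 : R))) ≃ₐ[R]
        (CliffordAlgebra Q ⊗[R] Matrix (Fin 16) (Fin 16) R)) :=
  ⟨CliffordPeriodicity.prodEightEquiv Q⟩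

/-- Atiyah–Bott–Shapiro periodicity, real case: `Cℓ_{k+8} ≅ Cℓ_k ⊗ℝ M₁₆(ℝ)`
as ℝ-algebras. -/
theorem real_clifford_periodicity (k : ℕ) :
    Nonempty (CliffordAlgebra (negDefiniteForm (k + 8)) ≃ₐ[ℝ]
      (CliffordAlgebra (negDefiniteForm k) ⊗[ℝ] Matrix (Fin 16) (Fin 16) ℝ)) :=
  (real_clifford_periodicity_general (negDefiniteForm k)).map
    (CliffordAlgebra.equivOfIsometry (CliffordPeriodicity.weightedSumSquaresFinAdd _)).trans
end

section
/- Let Q_k denote the negative-definite quadratic form Q_k(x) = −(x₁² + ⋯ + x_k²) on ℝᵏ and Cℓ_k = CliffordAlgebra(Q_k). Then there are isomorphisms of ℝ-algebras: Cℓ₃ ≅ ℍ × ℍ, Cℓ₄ ≅ M₂(ℍ), Cℓ₅ ≅ M₄(ℂ), Cℓ₆ ≅ M₈(ℝ), and Cℓ₇ ≅ M₈(ℝ) × M₈(ℝ), where ℍ denotes the real quaternions and Mₙ(𝔽) the n×n matrices over 𝔽 regarded as ℝ-algebras. -/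
open scoped Quaternion

/-!
If `ω ∈ Cℓ(Q₁)` anticommutes with vectors and `ω² = ε` is a unit, then `ω⁻¹` times the vectors of
`Q₂` commutes with `Cℓ(Q₁)` inside `Cℓ(Q₁ ⊥ εQ₂)`, so this algebra is the ungraded tensor product
`Cℓ(Q₁) ⊗ Cℓ(Q₂)`. For a binary form `Q₁` the factor `Cℓ(Q₁)` is a quaternion algebra, equal to `ℍ`
for the weights `-1, -1` and to `M₂` for the weights `1, c`. Two such steps give
`Cℓₖ₊₄ ≅ M₂ ⊗ (ℍ ⊗ Cℓₖ)`. Permuting the weights of `⟨-1, -1, 1, -w⟩` exchanges a factor `ℍ` for a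
factor `M₂`, whence `ℍ ⊗ Cℓ₁ ≅ M₂ ⊗ Cℓ₁` and `ℍ ⊗ Cℓ₂ ≅ M₂ ⊗ M₂`.
-/

section Pseudoscalar

open CliffordAlgebra Algebra.TensorProduct
open scoped TensorProduct

variable {R M₁ M₂ : Type*} [CommRing R] [AddCommGroup M₁] [AddCommGroup M₂] [Module R M₁]
  [Module R M₂] {Q₁ : QuadraticForm R M₁} {ω : CliffordAlgebra Q₁} {ε : Rˣ}

/-- An element `ω` of a Clifford algebra that anticommutes with all vectors and squares to the unit
scalar `ε`. The volume element of a nondegenerate form on an even-dimensional space is the model. -/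
structure IsPseudoscalar (ω : CliffordAlgebra Q₁) (ε : Rˣ) : Prop where
  mul_ι (x : M₁) : ω * ι Q₁ x = -(ι Q₁ x * ω)
  mul_self : ω * ω = algebraMap R _ ε

namespace IsPseudoscalar

/-- The homomorphism `Cℓ(Q₁ ⊥ εQ₂) → Cℓ(Q₁) ⊗ Cℓ(Q₂)` sending a vector `(x, y)` to
`x ⊗ 1 + ω ⊗ y`. -/
noncomputable def toTensor (h : IsPseudoscalar ω ε) (Q₂ : QuadraticForm R M₂) :
    CliffordAlgebra (Q₁.prod ((ε : R) • Q₂)) →ₐ[R] CliffordAlgebra Q₁ ⊗[R] CliffordAlgebra Q₂ :=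
  CliffordAlgebra.lift _
    ⟨((TensorProduct.mk R _ _).flip 1 ∘ₗ ι Q₁).coprod (TensorProduct.mk R _ _ ω ∘ₗ ι Q₂), by
      rintro ⟨x, y⟩
      simp [add_mul, mul_add, h.mul_ι, h.mul_self, Algebra.algebraMap_eq_smul_one, one_def,
        TensorProduct.neg_tmul, TensorProduct.smul_tmul', add_smul, mul_smul, smul_comm (Q₂ y)]⟩

@[simp]
theorem toTensor_ι (h : IsPseudoscalar ω ε) (Q₂ : QuadraticForm R M₂) (m : M₁ × M₂) :
    h.toTensor Q₂ (ι _ m) = ι Q₁ m.1 ⊗ₜ 1 + ω ⊗ₜ ι Q₂ m.2 := by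
  rw [toTensor, lift_ι_apply]
  rfl

theorem toTensor_map_inl (h : IsPseudoscalar ω ε) (Q₂ : QuadraticForm R M₂)
    (a : CliffordAlgebra Q₁) : h.toTensor Q₂ (map (.inl _ _) a) = a ⊗ₜ 1 := by
  suffices (h.toTensor Q₂).comp (map (.inl _ _)) = includeLeft from DFunLike.congr_fun this a
  ext x
  simp

/-- The vectors of the second summand, multiplied by `ω⁻¹`: unlike the vectors themselves, they
commute with `Cℓ(Q₁)`. -/
noncomputable def twistedInr (ω : CliffordAlgebra Q₁) (ε : Rˣ) (Q₂ : QuadraticForm R M₂) :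
    M₂ →ₗ[R] CliffordAlgebra (Q₁.prod ((ε : R) • Q₂)) :=
  ((ε⁻¹ : Rˣ) : R) • LinearMap.mulLeft R (map (.inl _ _) ω) ∘ₗ ι _ ∘ₗ LinearMap.inr R M₁ M₂

theorem twistedInr_apply (ω : CliffordAlgebra Q₁) (ε : Rˣ) (Q₂ : QuadraticForm R M₂) (y : M₂) :
    twistedInr ω ε Q₂ y = ((ε⁻¹ : Rˣ) : R) • (map (.inl _ _) ω * ι _ (0, y)) :=
  rfl

theorem map_inl_mul_twistedInr (h : IsPseudoscalar ω ε) (Q₂ : QuadraticForm R M₂) (y : M₂) :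
    map (.inl _ _) ω * twistedInr ω ε Q₂ y = ι _ (0, y) := by
  rw [twistedInr_apply, mul_smul_comm, ← mul_assoc, ← map_mul, h.mul_self, AlgHom.commutes,
    ← Algebra.smul_def, smul_smul, Units.inv_mul, one_smul]

theorem commute_ι_inl_twistedInr (h : IsPseudoscalar ω ε) (Q₂ : QuadraticForm R M₂)
    (x : M₁) (y : M₂) : Commute (ι _ (x, 0)) (twistedInr ω ε Q₂ y) := by
  let Q := Q₁.prod ((ε : R) • Q₂)
  let ω' : CliffordAlgebra Q := map (.inl _ _) ω
  have anticomm_ω : ω' * ι Q (x, 0) = -(ι Q (x, 0) * ω') := by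
    simpa [ω', Q] using congrArg (map (.inl Q₁ ((ε : R) • Q₂))) (h.mul_ι x)
  have anticomm_y : ι Q (0, y) * ι Q (x, 0) = -(ι Q (x, 0) * ι Q (0, y)) :=
    ι_mul_ι_comm_of_isOrtho (.inr_inl _ _)
  have comm : ω' * ι Q (0, y) * ι Q (x, 0) = ι Q (x, 0) * (ω' * ι Q (0, y)) := by
    rw [mul_assoc, anticomm_y, mul_neg, ← mul_assoc, anticomm_ω, neg_mul, neg_neg, mul_assoc]
  rw [twistedInr_apply]
  exact Commute.smul_right comm.symm _

theorem commute_map_inl_twistedInr (h : IsPseudoscalar ω ε) (Q₂ : QuadraticForm R M₂)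
    (a : CliffordAlgebra Q₁) (y : M₂) : Commute (map (.inl _ _) a) (twistedInr ω ε Q₂ y) := by
  induction a using CliffordAlgebra.induction with
  | algebraMap r => simpa using Algebra.commute_algebraMap_left r _
  | ι x => simpa using h.commute_ι_inl_twistedInr Q₂ x y
  | mul a b ha hb => simpa using ha.mul_left hb
  | add a b ha hb => simpa using ha.add_left hb

theorem twistedInr_mul_self (h : IsPseudoscalar ω ε) (Q₂ : QuadraticForm R M₂) (y : M₂) :
    twistedInr ω ε Q₂ y * twistedInr ω ε Q₂ y = algebraMap R _ (Q₂ y) := by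
  calc twistedInr ω ε Q₂ y * twistedInr ω ε Q₂ y
      = ((ε⁻¹ : Rˣ) : R) • (twistedInr ω ε Q₂ y * map (.inl _ _) ω * ι _ (0, y)) := by
        rw [mul_assoc, ← mul_smul_comm, ← twistedInr_apply]
    _ = ((ε⁻¹ : Rˣ) : R) • (ι _ (0, y) * ι _ (0, y)) := by
        rw [← (h.commute_map_inl_twistedInr Q₂ ω y).eq, h.map_inl_mul_twistedInr]
    _ = algebraMap R _ (Q₂ y) := by
        simp [ι_sq_scalar, Algebra.smul_def, ← mul_assoc, ← map_mul]

/-- The inverse of `toTensor`, sending `x ⊗ 1` to `x` and `1 ⊗ y` to `ω⁻¹y`. -/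
noncomputable def ofTensor (h : IsPseudoscalar ω ε) (Q₂ : QuadraticForm R M₂) :
    CliffordAlgebra Q₁ ⊗[R] CliffordAlgebra Q₂ →ₐ[R] CliffordAlgebra (Q₁.prod ((ε : R) • Q₂)) :=
  Algebra.TensorProduct.lift (map (.inl _ _))
    (CliffordAlgebra.lift Q₂ ⟨twistedInr ω ε Q₂, h.twistedInr_mul_self Q₂⟩)
    fun a b => by
      induction b using CliffordAlgebra.induction with
      | algebraMap r => simpa using Algebra.commute_algebraMap_right r _
      | ι y => simpa using h.commute_map_inl_twistedInr Q₂ a y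
      | mul b c hb hc => simpa using hb.mul_right hc
      | add b c hb hc => simpa using hb.add_right hc

theorem ofTensor_tmul_ι (h : IsPseudoscalar ω ε) (Q₂ : QuadraticForm R M₂)
    (a : CliffordAlgebra Q₁) (y : M₂) :
    h.ofTensor Q₂ (a ⊗ₜ ι Q₂ y) = map (.inl _ _) a * twistedInr ω ε Q₂ y := by
  simp [ofTensor]

theorem ofTensor_tmul_one (h : IsPseudoscalar ω ε) (Q₂ : QuadraticForm R M₂)
    (a : CliffordAlgebra Q₁) : h.ofTensor Q₂ (a ⊗ₜ 1) = map (.inl _ _) a := by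
  simp [ofTensor]

theorem toTensor_twistedInr (h : IsPseudoscalar ω ε) (Q₂ : QuadraticForm R M₂) (y : M₂) :
    h.toTensor Q₂ (twistedInr ω ε Q₂ y) = 1 ⊗ₜ ι Q₂ y := by
  rw [twistedInr_apply, map_smul, map_mul, toTensor_map_inl, toTensor_ι]
  simp [h.mul_self, Algebra.algebraMap_eq_smul_one, ← TensorProduct.smul_tmul', smul_smul]

/-- A Clifford algebra with a pseudoscalar absorbs a further orthogonal summand into an ungraded
tensor product. -/
noncomputable def tensorEquiv (h : IsPseudoscalar ω ε) (Q₂ : QuadraticForm R M₂) :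
    CliffordAlgebra (Q₁.prod ((ε : R) • Q₂)) ≃ₐ[R] CliffordAlgebra Q₁ ⊗[R] CliffordAlgebra Q₂ :=
  .ofAlgHom (h.toTensor Q₂) (h.ofTensor Q₂)
    (by
      ext x
      · simp [ofTensor_tmul_one]
      · simp [ofTensor_tmul_ι, toTensor_twistedInr])
    (by
      ext x
      · simp [ofTensor_tmul_one]
      · simp [ofTensor_tmul_ι, map_inl_mul_twistedInr, h])

end IsPseudoscalar

end Pseudoscalar

section Quaternion

variable {R : Type*} [CommRing R]

theorem isPseudoscalar_quaternionBasis_k (c₁ c₂ : Rˣ) :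
    IsPseudoscalar (CliffordAlgebraQuaternion.quaternionBasis (c₁ : R) c₂).k (-(c₁ * c₂)) where
  mul_ι x := CliffordAlgebraQuaternion.equiv.injective <| by
    ext <;> simp
  mul_self := CliffordAlgebraQuaternion.equiv.injective <| by
    ext <;> simp [QuaternionAlgebra.algebraMap_eq]

/-- Generators of `M₂(R)` as a quaternion algebra with `i² = 1` and `j² = c`. -/
def splitQuaternionBasis (c : R) : QuaternionAlgebra.Basis (Matrix (Fin 2) (Fin 2) R) 1 0 c where
  i := !![1, 0; 0, -1]
  j := !![0, c; 1, 0]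
  k := !![0, c; -1, 0]
  i_mul_i := by simp [Matrix.one_fin_two]
  j_mul_j := by simp [Matrix.one_fin_two]
  i_mul_j := by simp
  j_mul_i := by simp

theorem splitQuaternionBasis_lift (c : R) (q : ℍ[R,1,0,c]) :
    (splitQuaternionBasis c).lift q =
      !![q.re + q.imI, c * (q.imJ + q.imK); q.imJ - q.imK, q.re - q.imI] := by
  ext i j
  fin_cases i <;> fin_cases j <;>
    simp [QuaternionAlgebra.Basis.lift, splitQuaternionBasis, Matrix.algebraMap_matrix_apply,
      ← sub_eq_add_neg, mul_comm c, add_mul]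

noncomputable def splitQuaternionEquiv [Invertible (2 : R)] (c : Rˣ) :
    ℍ[R,1,0,(c : R)] ≃ₐ[R] Matrix (Fin 2) (Fin 2) R where
  __ := (splitQuaternionBasis (c : R)).liftHom
  invFun M := ⟨⅟2 * (M 0 0 + M 1 1), ⅟2 * (M 0 0 - M 1 1), ⅟2 * (c⁻¹ * M 0 1 + M 1 0),
    ⅟2 * (c⁻¹ * M 0 1 - M 1 0)⟩
  left_inv q := by ext <;> simp [splitQuaternionBasis_lift, ← two_mul]
  right_inv M := by
    ext i j
    fin_cases i <;> fin_cases j <;>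
      simp [splitQuaternionBasis_lift, ← mul_add, ← mul_sub, ← two_mul]

end Quaternion

section TensorProduct

open scoped TensorProduct

variable (R A : Type*) [CommSemiring R] [Semiring A] [Algebra R A]

noncomputable def matrixTensorEquiv (n : Type*) [Fintype n] [DecidableEq n] :
    Matrix n n R ⊗[R] A ≃ₐ[R] Matrix n n A :=
  (Algebra.TensorProduct.comm R _ _).trans (matrixEquivTensor n R A).symm

noncomputable def matrixMatrixEquiv (m n : ℕ) :
    Matrix (Fin m) (Fin m) (Matrix (Fin n) (Fin n) A) ≃ₐ[R]
      Matrix (Fin (m * n)) (Fin (m * n)) A :=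
  (Matrix.compAlgEquiv _ _ A R).trans (Matrix.reindexAlgEquiv R A finProdFinEquiv)

noncomputable def matrixTensorMatrixTensorEquiv (m n : ℕ) :
    Matrix (Fin m) (Fin m) R ⊗[R] (Matrix (Fin n) (Fin n) R ⊗[R] A) ≃ₐ[R]
      Matrix (Fin (m * n)) (Fin (m * n)) A :=
  (matrixTensorEquiv R _ (Fin m)).trans <| (matrixTensorEquiv R A (Fin n)).mapMatrix.trans <|
    matrixMatrixEquiv R A m n

noncomputable def tensorProdSelfEquiv : A ⊗[R] (R × R) ≃ₐ[R] A × A :=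
  (Algebra.TensorProduct.prodRight R R A R R).trans <|
    .prodCongr (Algebra.TensorProduct.rid R R A) (Algebra.TensorProduct.rid R R A)

end TensorProduct

section Idempotent

variable (R : Type*) {A : Type*} [CommRing R] [Ring A] [Algebra R A]

theorem isIdempotentElem_invOf_two_smul_one_add [Invertible (2 : R)] {e : A} (he : e * e = 1) :
    IsIdempotentElem ((⅟2 : R) • (1 + e)) := by
  simp only [IsIdempotentElem, smul_mul_smul_comm, add_mul, mul_add, he, one_mul, mul_one]
  match_scalars <;> linear_combination ⅟2 * invOf_mul_self (2 : R)

/-- The homomorphism `(a, b) ↦ a p + b (1 - p)` determined by an idempotent `p`. -/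
noncomputable def idempotentProdHom {p : A} (hp : IsIdempotentElem p) : R × R →ₐ[R] A :=
  .ofLinearMap ((LinearMap.toSpanSingleton R A p).coprod (LinearMap.toSpanSingleton R A (1 - p)))
    (by simp)
    (by simp [add_mul, mul_add, hp.eq, hp.one_sub.eq, hp.mul_one_sub_self, hp.one_sub_mul_self,
      smul_smul, mul_comm])

@[simp]
theorem idempotentProdHom_apply {p : A} (hp : IsIdempotentElem p) (x : R × R) :
    idempotentProdHom R hp x = x.1 • p + x.2 • (1 - p) :=
  rfl

end Idempotent

/-- The Clifford algebra of the diagonal quadratic form `∑ᵢ wᵢxᵢ²`. -/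
abbrev DiagonalClifford {ι R : Type*} [Fintype ι] [CommRing R] (w : ι → R) : Type _ :=
  CliffordAlgebra (QuadraticMap.weightedSumSquares R w)

namespace DiagonalClifford

open Matrix QuadraticMap
open scoped TensorProduct

variable {ι κ R : Type*} [Fintype ι] [Fintype κ] [CommRing R] {n : ℕ}

noncomputable def reindex (σ : κ ≃ ι) (w : ι → R) :
    DiagonalClifford w ≃ₐ[R] DiagonalClifford (w ∘ σ) :=
  CliffordAlgebra.equivOfIsometry
    { LinearEquiv.funCongrLeft R R σ with
      map_app' x := by simp [weightedSumSquares_apply, ← σ.sum_comp] }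

noncomputable def quaternionEquiv (v : Fin 2 → R) : DiagonalClifford v ≃ₐ[R] ℍ[R,v 0,0,v 1] :=
  (CliffordAlgebra.equivOfIsometry
    { LinearEquiv.finTwoArrow R R with
      map_app' x := by simp [weightedSumSquares_apply] }).trans CliffordAlgebraQuaternion.equiv

noncomputable def complexEquiv : DiagonalClifford (-1 : Fin 1 → ℝ) ≃ₐ[ℝ] ℂ :=
  (CliffordAlgebra.equivOfIsometry
    { LinearEquiv.funUnique (Fin 1) ℝ ℝ with
      map_app' x := by simp [weightedSumSquares_apply, CliffordAlgebraComplex.Q] }).trans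
    CliffordAlgebraComplex.equiv

/-- Evaluation of the unit vector at the two square roots `1` and `-1` of its square. -/
noncomputable def toProd : DiagonalClifford (1 : Fin 1 → R) →ₐ[R] R × R :=
  CliffordAlgebra.lift _ ⟨(LinearMap.proj 0).prod (-LinearMap.proj 0), fun x => by
    ext <;> simp [weightedSumSquares_apply]⟩

@[simp]
theorem toProd_ι (x : Fin 1 → R) : toProd (CliffordAlgebra.ι _ x) = (x 0, -x 0) :=
  CliffordAlgebra.lift_ι_apply _ _ _

theorem ι_one_mul_self : CliffordAlgebra.ι (weightedSumSquares R (1 : Fin 1 → R)) 1 *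
    CliffordAlgebra.ι (weightedSumSquares R (1 : Fin 1 → R)) 1 = 1 := by
  simp [CliffordAlgebra.ι_sq_scalar, weightedSumSquares_apply]

noncomputable def prodEquiv [Invertible (2 : R)] :
    DiagonalClifford (1 : Fin 1 → R) ≃ₐ[R] R × R :=
  .ofAlgHom toProd (idempotentProdHom R (isIdempotentElem_invOf_two_smul_one_add R ι_one_mul_self))
    (by ext x <;> simp [← mul_two])
    (by
      ext i
      have single_eq_one : (Pi.single i 1 : Fin 1 → R) = 1 := by
        simp [funext_iff, Unique.forall_iff, Subsingleton.elim i 0]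
      simp only [single_eq_one, AlgHom.toLinearMap_apply, LinearMap.comp_apply, AlgHom.comp_apply,
        LinearMap.single_apply, toProd_ι, idempotentProdHom_apply, Pi.one_apply, AlgHom.id_apply]
      match_scalars <;> linear_combination invOf_mul_self (2 : R))

def isometryEquivProdTail {c₁ c₂ ε : R} {v : Fin (n + 2) → R} {w : Fin n → R} (h₀ : v 0 = c₁)
    (h₁ : v 1 = c₂) (h : ∀ i, v i.succ.succ = ε * w i) :
    (weightedSumSquares R v).IsometryEquiv
      ((CliffordAlgebraQuaternion.Q c₁ c₂).prod (ε • weightedSumSquares R w)) where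
  toFun x := ((x 0, x 1), fun i => x i.succ.succ)
  invFun x := vecCons x.1.1 (vecCons x.1.2 x.2)
  map_add' _ _ := rfl
  map_smul' _ _ := rfl
  left_inv x := by ext i; exact i.cases rfl (Fin.cases rfl fun _ => rfl)
  right_inv _ := rfl
  map_app' x := by
    simp [weightedSumSquares_apply, Fin.sum_univ_succ, add_assoc, Finset.mul_sum, mul_assoc,
      ← h₀, ← h₁, h]

/-- The step `Cℓ(c₁, c₂, -c₁c₂w) ≅ Cℓ(c₁, c₂) ⊗ Cℓ(w)`, with the weights of `Cℓ(c₁, c₂, -c₁c₂w)`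
given only up to propositional equality. -/
noncomputable def quaternionTensorEquiv (c₁ c₂ : Rˣ) {v : Fin (n + 2) → R} {w : Fin n → R}
    (h₀ : v 0 = c₁) (h₁ : v 1 = c₂) (h : ∀ i, v i.succ.succ = -(c₁ * c₂ * w i)) :
    DiagonalClifford v ≃ₐ[R] ℍ[R,(c₁ : R),0,(c₂ : R)] ⊗[R] DiagonalClifford w :=
  let split := isometryEquivProdTail (ε := ((-(c₁ * c₂) : Rˣ) : R)) h₀ h₁ (by simpa)
  (CliffordAlgebra.equivOfIsometry split).trans <|
    ((isPseudoscalar_quaternionBasis_k c₁ c₂).tensorEquiv _).trans <|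
      Algebra.TensorProduct.congr CliffordAlgebraQuaternion.equiv .refl

noncomputable def negTensorEquiv {v : Fin (n + 2) → R} {w : Fin n → R} (h₀ : v 0 = -1)
    (h₁ : v 1 = -1) (h : ∀ i, v i.succ.succ = -w i) :
    DiagonalClifford v ≃ₐ[R] ℍ[R] ⊗[R] DiagonalClifford w :=
  quaternionTensorEquiv (-1) (-1) (by simpa) (by simpa) (by simpa)

variable [Invertible (2 : R)]

noncomputable def splitTensorEquiv (c : Rˣ) {v : Fin (n + 2) → R} {w : Fin n → R} (h₀ : v 0 = 1)
    (h₁ : v 1 = c) (h : ∀ i, v i.succ.succ = -(c * w i)) :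
    DiagonalClifford v ≃ₐ[R] Matrix (Fin 2) (Fin 2) R ⊗[R] DiagonalClifford w :=
  (quaternionTensorEquiv 1 c h₀ h₁ (by simpa)).trans <|
    Algebra.TensorProduct.congr (splitQuaternionEquiv c) .refl

/-- Both sides are the Clifford algebra of `⟨-1, -1, 1, -w₁, -w₂, …⟩`: the first splits off the
weights `-1, -1`, the second the weights `1, -1`. -/
noncomputable def quaternionTensorEquivMatrixTensor {w w' : Fin (n + 1) → R} (h₀ : w 0 = -1)
    (h₀' : w' 0 = -1) (h : ∀ i : Fin n, w' i.succ = -w i.succ) :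
    ℍ[R] ⊗[R] DiagonalClifford w ≃ₐ[R] Matrix (Fin 2) (Fin 2) R ⊗[R] DiagonalClifford w' :=
  let v : Fin (n + 3) → R := vecCons (-1) (vecCons (-1) (-w))
  let v' : Fin (n + 3) → R := v ∘ Equiv.swap 0 2
  have v'_zero : v' 0 = 1 := by simp [v', v, h₀]
  have v'_one : v' 1 = -1 :=
    congrArg v (Equiv.swap_apply_of_ne_of_ne one_ne_zero
      ((Fin.succ_injective _).ne Fin.zero_ne_one))
  have v'_two : v' 2 = w' 0 := by simp [v', v, h₀']
  have v'_succ (i : Fin n) : v' i.succ.succ.succ = w' i.succ :=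
    (congrArg v (Equiv.swap_apply_of_ne_of_ne (Fin.succ_ne_zero _)
      ((Fin.succ_injective _).ne ((Fin.succ_injective _).ne (Fin.succ_ne_zero i))))).trans
      (h i).symm
  let neg : DiagonalClifford v ≃ₐ[R] ℍ[R] ⊗[R] DiagonalClifford w :=
    negTensorEquiv rfl rfl fun _ => rfl
  let split : DiagonalClifford v' ≃ₐ[R] Matrix (Fin 2) (Fin 2) R ⊗[R] DiagonalClifford w' :=
    splitTensorEquiv (-1) v'_zero v'_one <|
      Fin.cases (by simpa using v'_two) (by simpa using v'_succ)
  neg.symm.trans <| (reindex (.swap 0 2) v).trans split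

/-- The two steps `Cℓ(-1, -1, -1, …) ≅ ℍ ⊗ Cℓ(1, 1, …)` and `Cℓ(1, 1, 1, …) ≅ M₂ ⊗ Cℓ(-1, …)`
combined. -/
noncomputable def periodicityEquiv (k : ℕ) :
    DiagonalClifford (-1 : Fin (k + 4) → R) ≃ₐ[R]
      Matrix (Fin 2) (Fin 2) R ⊗[R] (ℍ[R] ⊗[R] DiagonalClifford (-1 : Fin k → R)) :=
  let neg : DiagonalClifford (-1 : Fin (k + 4) → R) ≃ₐ[R]
      ℍ[R] ⊗[R] DiagonalClifford (1 : Fin (k + 2) → R) := negTensorEquiv rfl rfl fun _ => rfl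
  let split : DiagonalClifford (1 : Fin (k + 2) → R) ≃ₐ[R]
      Matrix (Fin 2) (Fin 2) R ⊗[R] DiagonalClifford (-1 : Fin k → R) :=
    splitTensorEquiv 1 rfl rfl (by simp)
  neg.trans <| (Algebra.TensorProduct.congr .refl split).trans <|
    Algebra.TensorProduct.leftComm R _ _ _

noncomputable def quaternionTensorNegTwoEquiv :
    ℍ[R] ⊗[R] DiagonalClifford (-1 : Fin 2 → R) ≃ₐ[R]
      Matrix (Fin 2) (Fin 2) R ⊗[R] Matrix (Fin 2) (Fin 2) R :=
  let split : DiagonalClifford ![-1, (1 : R)] ≃ₐ[R] Matrix (Fin 2) (Fin 2) R :=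
    (reindex (.swap 0 1) _).trans <| (quaternionEquiv _).trans <| splitQuaternionEquiv (-1)
  (quaternionTensorEquivMatrixTensor rfl rfl (by simp)).trans <|
    Algebra.TensorProduct.congr .refl split

noncomputable def negThreeEquivTensor :
    DiagonalClifford (-1 : Fin 3 → R) ≃ₐ[R] DiagonalClifford (-1 : Fin 2 → R) ⊗[R] (R × R) :=
  let neg : DiagonalClifford (-1 : Fin 3 → R) ≃ₐ[R] ℍ[R] ⊗[R] DiagonalClifford (1 : Fin 1 → R) :=
    negTensorEquiv rfl rfl fun _ => rfl
  neg.trans <| Algebra.TensorProduct.congr (quaternionEquiv (-1)).symm prodEquiv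

noncomputable def negThreeEquiv :
    DiagonalClifford (-1 : Fin 3 → R) ≃ₐ[R] ℍ[R] × ℍ[R] :=
  negThreeEquivTensor.trans <|
    (Algebra.TensorProduct.congr (quaternionEquiv (-1)) .refl).trans <| tensorProdSelfEquiv R _

noncomputable def negFourEquiv :
    DiagonalClifford (-1 : Fin 4 → R) ≃ₐ[R] Matrix (Fin 2) (Fin 2) ℍ[R] :=
  let neg : DiagonalClifford (-1 : Fin 4 → R) ≃ₐ[R] ℍ[R] ⊗[R] DiagonalClifford (1 : Fin 2 → R) :=
    negTensorEquiv rfl rfl fun _ => rfl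
  let split : DiagonalClifford (1 : Fin 2 → R) ≃ₐ[R] Matrix (Fin 2) (Fin 2) R :=
    (quaternionEquiv 1).trans (splitQuaternionEquiv 1)
  neg.trans <| (Algebra.TensorProduct.congr .refl split).trans (matrixEquivTensor _ R _).symm

noncomputable def negFiveEquiv : DiagonalClifford (-1 : Fin 5 → R) ≃ₐ[R]
    Matrix (Fin 4) (Fin 4) (DiagonalClifford (-1 : Fin 1 → R)) :=
  let swap : ℍ[R] ⊗[R] DiagonalClifford (-1 : Fin 1 → R) ≃ₐ[R]
      Matrix (Fin 2) (Fin 2) R ⊗[R] DiagonalClifford (-1 : Fin 1 → R) :=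
    quaternionTensorEquivMatrixTensor rfl rfl fun i => i.elim0
  (periodicityEquiv 1).trans <| (Algebra.TensorProduct.congr .refl swap).trans <|
    matrixTensorMatrixTensorEquiv R _ 2 2

noncomputable def negSixEquiv :
    DiagonalClifford (-1 : Fin 6 → R) ≃ₐ[R] Matrix (Fin 8) (Fin 8) R :=
  (periodicityEquiv 2).trans <|
    (Algebra.TensorProduct.congr .refl (quaternionTensorNegTwoEquiv (R := R))).trans <|
    (matrixTensorMatrixTensorEquiv R _ 2 2).trans <| matrixMatrixEquiv R R 4 2

noncomputable def negSevenEquiv : DiagonalClifford (-1 : Fin 7 → R) ≃ₐ[R]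
    Matrix (Fin 8) (Fin 8) R × Matrix (Fin 8) (Fin 8) R :=
  let splitThree : ℍ[R] ⊗[R] DiagonalClifford (-1 : Fin 3 → R) ≃ₐ[R]
      ℍ[R] ⊗[R] DiagonalClifford (-1 : Fin 2 → R) ⊗[R] (R × R) :=
    (Algebra.TensorProduct.congr .refl negThreeEquivTensor).trans
      (Algebra.TensorProduct.assoc R R R _ _ _).symm
  let split : DiagonalClifford (-1 : Fin 7 → R) ≃ₐ[R]
      DiagonalClifford (-1 : Fin 6 → R) ⊗[R] (R × R) :=
    (periodicityEquiv 3).trans <| (Algebra.TensorProduct.congr .refl splitThree).trans <|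
      (Algebra.TensorProduct.assoc R R R _ _ _).symm.trans <|
      Algebra.TensorProduct.congr (periodicityEquiv 2).symm .refl
  split.trans <| (Algebra.TensorProduct.congr negSixEquiv .refl).trans <| tensorProdSelfEquiv R _

end DiagonalClifford

/-- The algebra `DiagonalClifford (-1 : Fin 1 → R)` takes the place of `ℂ`. -/
theorem low_dimensional_real_clifford_algebras_general (R : Type*) [CommRing R]
    [Invertible (2 : R)] :
    Nonempty (DiagonalClifford (-1 : Fin 3 → R) ≃ₐ[R] ℍ[R] × ℍ[R]) ∧
    Nonempty (DiagonalClifford (-1 : Fin 4 → R) ≃ₐ[R] Matrix (Fin 2) (Fin 2) ℍ[R]) ∧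
    Nonempty (DiagonalClifford (-1 : Fin 5 → R) ≃ₐ[R]
      Matrix (Fin 4) (Fin 4) (DiagonalClifford (-1 : Fin 1 → R))) ∧
    Nonempty (DiagonalClifford (-1 : Fin 6 → R) ≃ₐ[R] Matrix (Fin 8) (Fin 8) R) ∧
    Nonempty (DiagonalClifford (-1 : Fin 7 → R) ≃ₐ[R]
      Matrix (Fin 8) (Fin 8) R × Matrix (Fin 8) (Fin 8) R) :=
  ⟨⟨DiagonalClifford.negThreeEquiv⟩, ⟨DiagonalClifford.negFourEquiv⟩,
    ⟨DiagonalClifford.negFiveEquiv⟩, ⟨DiagonalClifford.negSixEquiv⟩,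
    ⟨DiagonalClifford.negSevenEquiv⟩⟩

/-- classification of low-dimensional real Clifford algebras:
`Cℓ₃ ≅ ℍ × ℍ`, `Cℓ₄ ≅ M₂(ℍ)`, `Cℓ₅ ≅ M₄(ℂ)`, `Cℓ₆ ≅ M₈(ℝ)`, and
`Cℓ₇ ≅ M₈(ℝ) × M₈(ℝ)` as ℝ-algebras. -/
theorem low_dimensional_real_clifford_algebras :
    Nonempty (CliffordAlgebra (negDefiniteForm 3) ≃ₐ[ℝ] (ℍ[ℝ] × ℍ[ℝ])) ∧
    Nonempty (CliffordAlgebra (negDefiniteForm 4) ≃ₐ[ℝ] Matrix (Fin 2) (Fin 2) ℍ[ℝ]) ∧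
    Nonempty (CliffordAlgebra (negDefiniteForm 5) ≃ₐ[ℝ] Matrix (Fin 4) (Fin 4) ℂ) ∧
    Nonempty (CliffordAlgebra (negDefiniteForm 6) ≃ₐ[ℝ] Matrix (Fin 8) (Fin 8) ℝ) ∧
    Nonempty (CliffordAlgebra (negDefiniteForm 7) ≃ₐ[ℝ]
      (Matrix (Fin 8) (Fin 8) ℝ × Matrix (Fin 8) (Fin 8) ℝ)) := by
  obtain ⟨h₃, h₄, ⟨e₅⟩, h₆, h₇⟩ := low_dimensional_real_clifford_algebras_general ℝ
  exact ⟨h₃, h₄, ⟨e₅.trans DiagonalClifford.complexEquiv.mapMatrix⟩, h₆, h₇⟩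
end

section
/- The mapping cone of the inclusion ℝ ↪ ℂ, namely the real ⋆-algebra Cc = {f ∈ C([0,1], ℂ) : f(0) ∈ ℝ and f(1) = 0} with pointwise operations and pointwise complex conjugation as star, is isomorphic as a real ⋆-algebra to C₀^ℝ(iℝ) = {f ∈ C₀(ℝ, ℂ) : f(−x) = conj(f(x)) for all x ∈ ℝ}. -/
/-!
The birational order isomorphism `x ↦ x / (1 + x)` exhibits `[0,1]`, with `1` as point at infinity,
as the one-point compactification of the half-line `[0,∞)`, so functions on `[0,1]` vanishing at `1`
are the elements of `C₀([0,∞), ℂ)`. A function `g` with `g (-x) = conj (g x)` is determined by its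
restriction to `[0,∞)`, and the only constraint on this restriction is that its value at `0` be
real. Hence restriction to the half-line followed by extension to the compactification, which is a
⋆-homomorphism on all of `C₀(ℝ, ℂ)`, maps `C₀^ℝ(iℝ)` bijectively onto the mapping cone.
-/

open scoped ZeroAtInfty ComplexConjugate

set_option synthInstance.maxHeartbeats 1000000

/-- The mapping cone of the inclusion `ℝ ↪ ℂ`:
`Cc = {f ∈ C([0,1], ℂ) : f(0) ∈ ℝ, f(1) = 0}`, as a non-unital real ⋆-subalgebra of
`C([0,1], ℂ)` (with pointwise complex conjugation as star). -/
noncomputable def mappingConeRealComplex : NonUnitalStarSubalgebra ℝ C(unitInterval, ℂ) where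
  carrier := {f : C(unitInterval, ℂ) | (f 0).im = 0 ∧ f 1 = 0}
  add_mem' := by
    rintro a b ⟨ha0, ha1⟩ ⟨hb0, hb1⟩
    constructor <;> simp [ha0, ha1, hb0, hb1]
  mul_mem' := by
    rintro a b ⟨ha0, ha1⟩ ⟨hb0, hb1⟩
    constructor <;> simp [Complex.mul_im, ha0, ha1, hb0, hb1]
  zero_mem' := by constructor <;> simp
  smul_mem' := by
    rintro r a ⟨ha0, ha1⟩
    constructor <;> simp [Complex.smul_im, ha0, ha1]
  star_mem' := by
    rintro a ⟨ha0, ha1⟩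
    constructor <;> simp [ha0, ha1]

/-- The real ⋆-algebra `C₀^ℝ(iℝ) = {f ∈ C₀(ℝ, ℂ) : f(−x) = conj (f x)}`, as a
non-unital real ⋆-subalgebra of `C₀(ℝ, ℂ)`. -/
noncomputable def CoRiR : NonUnitalStarSubalgebra ℝ C₀(ℝ, ℂ) where
  carrier := {f : C₀(ℝ, ℂ) | ∀ x : ℝ, f (-x) = conj (f x)}
  add_mem' := by
    intro a b ha hb
    simp only [Set.mem_setOf_eq] at *
    intro x
    simp [ha x, hb x]
  mul_mem' := by
    intro a b ha hb
    simp only [Set.mem_setOf_eq] at *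
    intro x
    simp [ha x, hb x]
  zero_mem' := by
    simp only [Set.mem_setOf_eq]
    intro x
    simp
  smul_mem' := by
    intro r a ha
    simp only [Set.mem_setOf_eq] at *
    intro x
    simp [ha x, Complex.real_smul]
  star_mem' := by
    intro a ha
    simp only [Set.mem_setOf_eq] at *
    intro x
    simp only [ZeroAtInftyContinuousMap.star_apply, ha x, starRingEnd_apply, star_star]

open Filter Set Topology
open scoped NNReal OnePoint

section StarSubalgebra

variable {R A B : Type*} [CommSemiring R]
  [NonUnitalNonAssocSemiring A] [Star A] [Module R A]
  [NonUnitalNonAssocSemiring B] [Star B] [Module R B]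

/-- The ⋆-isomorphism between ⋆-subalgebras obtained by restricting a ⋆-homomorphism which maps one
bijectively onto the other. -/
noncomputable def starSubalgebraEquivOfBijOn (φ : A →⋆ₙₐ[R] B) {S : NonUnitalStarSubalgebra R A}
    {T : NonUnitalStarSubalgebra R B} (h : BijOn φ S T) : S ≃⋆ₐ[R] T :=
  StarAlgEquiv.ofBijective
    (NonUnitalStarAlgHom.codRestrict
      (φ.comp (NonUnitalStarSubalgebraClass.subtype S)) T fun a => h.mapsTo a.2)
    h.bijective

end StarSubalgebra

section ZeroAtInfty

variable (R : Type*) {X Y A : Type*} [TopologicalSpace X] [TopologicalSpace Y]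
  [TopologicalSpace A] [NonUnitalNonAssocSemiring A] [IsTopologicalSemiring A] [StarRing A]
  [ContinuousStar A] [Semiring R] [Module R A] [ContinuousConstSMul R A]

/-- Pullback of functions vanishing at infinity along a cocompact map, as a ⋆-homomorphism. -/
def zeroAtInftyPullback (p : CocompactMap X Y) : C₀(Y, A) →⋆ₙₐ[R] C₀(X, A) where
  __ := ZeroAtInftyContinuousMap.compNonUnitalAlgHom p
  map_star' _ := rfl

variable [R1Space X]

/-- Extension by `0` of functions vanishing at infinity to the one-point compactification, as a
⋆-homomorphism. -/
def extendOnePoint : C₀(X, A) →⋆ₙₐ[R] C(OnePoint X, A) where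
  toFun f := OnePoint.continuousMapMk f 0 (coclosedCompact_eq_cocompact (X := X) ▸ zero_at_infty f)
  map_smul' r f := by ext x; induction x using OnePoint.rec <;> simp [OnePoint.continuousMapMk]
  map_zero' := by ext x; induction x using OnePoint.rec <;> simp [OnePoint.continuousMapMk]
  map_add' f g := by ext x; induction x using OnePoint.rec <;> simp [OnePoint.continuousMapMk]
  map_mul' f g := by ext x; induction x using OnePoint.rec <;> simp [OnePoint.continuousMapMk]
  map_star' f := by ext x; induction x using OnePoint.rec <;> simp [OnePoint.continuousMapMk]

@[simp]
theorem extendOnePoint_coe (f : C₀(X, A)) (x : X) : extendOnePoint R f x = f x :=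
  rfl

@[simp]
theorem extendOnePoint_infty (f : C₀(X, A)) : extendOnePoint R f ∞ = 0 :=
  rfl

theorem exists_extendOnePoint_eq {f : C(OnePoint X, A)} (hf : f ∞ = 0) :
    ∃ g : C₀(X, A), extendOnePoint R g = f := by
  have tendsto_zero : Tendsto (fun x : X => f x) (cocompact X) (𝓝 0) := by
    rw [← coclosedCompact_eq_cocompact, ← hf]
    exact ((OnePoint.continuous_iff f).1 f.continuous).1
  refine ⟨⟨f.comp ⟨(↑), OnePoint.continuous_coe⟩, tendsto_zero⟩, ?_⟩
  ext x
  induction x using OnePoint.rec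
  case infty => exact hf.symm
  case coe => rfl

end ZeroAtInfty

section HermitianExtension

theorem eq_of_map_neg_eq_star {A : Type*} [Star A] {f g : ℝ → A}
    (hf : ∀ x, f (-x) = star (f x)) (hg : ∀ x, g (-x) = star (g x))
    (h : ∀ x : ℝ≥0, f x = g x) : f = g := by
  ext x
  obtain hx | hx := le_total 0 x
  · exact h ⟨x, hx⟩
  · have h_neg : f (-x) = g (-x) := h ⟨-x, neg_nonneg.2 hx⟩
    rw [← neg_neg x, hf, hg, h_neg]

theorem tendsto_nnnorm_cocompact {E : Type*} [SeminormedAddGroup E] [ProperSpace E] :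
    Tendsto (fun x : E => ‖x‖₊) (cocompact E) (cocompact ℝ≥0) :=
  tendsto_cocompact_of_tendsto_dist_comp_atTop 0 <| by
    simpa [NNReal.dist_eq] using! tendsto_norm_cocompact_atTop (E := E)

variable {A : Type*} [TopologicalSpace A] [AddMonoid A] [StarAddMonoid A] [ContinuousStar A]

/-- The extension of a function on the half-line to a function `g` on `ℝ` satisfying
`g (-x) = star (g x)`. -/
noncomputable def hermitianExtension (f : C₀(ℝ≥0, A)) (hf : IsSelfAdjoint (f 0)) : C₀(ℝ, A) where
  toFun x := if 0 ≤ x then f ‖x‖₊ else star (f ‖x‖₊)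
  continuous_toFun := by
    have h : Continuous fun x : ℝ => f ‖x‖₊ := (map_continuous f).comp continuous_nnnorm
    refine h.if_le h.star continuous_const continuous_id ?_
    rintro x rfl
    simpa using hf.star_eq.symm
  zero_at_infty' := by
    have h := (zero_at_infty f).comp (tendsto_nnnorm_cocompact (E := ℝ))
    exact h.if' (by simpa using h.star)

theorem hermitianExtension_coe (f : C₀(ℝ≥0, A)) (hf : IsSelfAdjoint (f 0)) (x : ℝ≥0) :
    hermitianExtension f hf x = f x := by
  simp [hermitianExtension]

theorem hermitianExtension_neg (f : C₀(ℝ≥0, A)) (hf : IsSelfAdjoint (f 0)) (x : ℝ) :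
    hermitianExtension f hf (-x) = star (hermitianExtension f hf x) := by
  obtain hx | rfl | hx := lt_trichotomy x 0
  · simp [hermitianExtension, hx.le, hx.not_ge]
  · simp [hermitianExtension, hf.star_eq]
  · simp [hermitianExtension, hx.le, hx.not_ge]

end HermitianExtension

section UnitInterval

/-- The embedding `x ↦ x / (1 + x)` of the half-line into the unit interval. -/
noncomputable def halfLineToUnitInterval (x : ℝ≥0) : unitInterval :=
  ENNReal.orderIsoUnitIntervalBirational x

theorem isEmbedding_halfLineToUnitInterval : IsEmbedding halfLineToUnitInterval :=
  ENNReal.orderIsoUnitIntervalBirational.toHomeomorph.isEmbedding.comp ENNReal.isEmbedding_coe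

theorem range_halfLineToUnitInterval : range halfLineToUnitInterval = {1}ᶜ := by
  let e := ENNReal.orderIsoUnitIntervalBirational
  calc range halfLineToUnitInterval = e '' range ENNReal.ofNNReal := range_comp e ENNReal.ofNNReal
    _ = {e ⊤}ᶜ := by rw [ENNReal.range_coe, image_compl_eq e.bijective, image_singleton]
    _ = {1}ᶜ := by rw [show e ⊤ = 1 from e.map_top]

theorem halfLineToUnitInterval_zero : halfLineToUnitInterval 0 = 0 :=
  map_bot ENNReal.orderIsoUnitIntervalBirational

/-- The unit interval as the one-point compactification of the half-line, with `1` as the point at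
infinity. -/
noncomputable def unitIntervalHomeoOnePoint : unitInterval ≃ₜ OnePoint ℝ≥0 :=
  (OnePoint.equivOfIsEmbeddingOfRangeEq 1 halfLineToUnitInterval
    isEmbedding_halfLineToUnitInterval range_halfLineToUnitInterval).symm

theorem unitIntervalHomeoOnePoint_one : unitIntervalHomeoOnePoint 1 = ∞ :=
  unitIntervalHomeoOnePoint.apply_symm_apply ∞

theorem unitIntervalHomeoOnePoint_halfLineToUnitInterval (x : ℝ≥0) :
    unitIntervalHomeoOnePoint (halfLineToUnitInterval x) = x :=
  unitIntervalHomeoOnePoint.apply_symm_apply x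

end UnitInterval

section Cone

/-- The inclusion of the half-line into `ℝ` as a cocompact map. -/
def halfLineInclusion : CocompactMap ℝ≥0 ℝ where
  toFun := (↑)
  cocompact_tendsto' := NNReal.isClosedEmbedding_coe.tendsto_cocompact

/-- The ⋆-homomorphism `C₀(ℝ, ℂ) → C([0,1], ℂ)` which restricts a function to the half-line and
transports it to `[0,1)`, extending by `0` at `1`. -/
noncomputable def coneHom : C₀(ℝ, ℂ) →⋆ₙₐ[ℝ] C(unitInterval, ℂ) :=
  (ContinuousMap.compStarAlgHom' ℝ ℂ
    (unitIntervalHomeoOnePoint : C(unitInterval, OnePoint ℝ≥0))).toNonUnitalStarAlgHom.comp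
    ((extendOnePoint ℝ).comp (zeroAtInftyPullback ℝ halfLineInclusion))

theorem coneHom_apply (g : C₀(ℝ, ℂ)) (t : unitInterval) :
    coneHom g t =
      extendOnePoint ℝ (zeroAtInftyPullback ℝ halfLineInclusion g) (unitIntervalHomeoOnePoint t) :=
  rfl

theorem coneHom_one (g : C₀(ℝ, ℂ)) : coneHom g 1 = 0 := by
  rw [coneHom_apply, unitIntervalHomeoOnePoint_one, extendOnePoint_infty]

theorem coneHom_halfLineToUnitInterval (g : C₀(ℝ, ℂ)) (x : ℝ≥0) :
    coneHom g (halfLineToUnitInterval x) = g x := by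
  rw [coneHom_apply, unitIntervalHomeoOnePoint_halfLineToUnitInterval, extendOnePoint_coe]
  rfl

theorem mapsTo_coneHom : MapsTo coneHom CoRiR mappingConeRealComplex := by
  intro g hg
  refine ⟨?_, coneHom_one g⟩
  rw [← halfLineToUnitInterval_zero, coneHom_halfLineToUnitInterval, ← Complex.conj_eq_iff_im]
  simpa using (hg 0).symm

theorem injOn_coneHom : InjOn coneHom CoRiR := by
  intro g hg g' hg' h
  refine DFunLike.coe_injective (eq_of_map_neg_eq_star hg hg' fun x => ?_)
  rw [← coneHom_halfLineToUnitInterval, h, coneHom_halfLineToUnitInterval]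

theorem surjOn_coneHom : SurjOn coneHom CoRiR mappingConeRealComplex := by
  rintro f ⟨hf_zero, hf_one⟩
  obtain ⟨h, h_extend⟩ := exists_extendOnePoint_eq ℝ
    (f := f.comp (unitIntervalHomeoOnePoint.symm : C(OnePoint ℝ≥0, unitInterval))) hf_one
  have h_apply_zero : h 0 = f 0 := by
    rw [← extendOnePoint_coe ℝ, h_extend, ← halfLineToUnitInterval_zero]
    rfl
  have h_selfAdjoint : IsSelfAdjoint (h 0) := by
    rw [h_apply_zero]
    exact Complex.conj_eq_iff_im.2 hf_zero
  have h_restrict : zeroAtInftyPullback ℝ halfLineInclusion (hermitianExtension h h_selfAdjoint) =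
      h := ZeroAtInftyContinuousMap.ext (hermitianExtension_coe h h_selfAdjoint)
  refine ⟨hermitianExtension h h_selfAdjoint, hermitianExtension_neg h h_selfAdjoint, ?_⟩
  ext t
  rw [coneHom_apply, h_restrict, h_extend]
  exact congrArg f (unitIntervalHomeoOnePoint.symm_apply_apply t)

theorem bijOn_coneHom : BijOn coneHom CoRiR mappingConeRealComplex :=
  ⟨mapsTo_coneHom, injOn_coneHom, surjOn_coneHom⟩

end Cone

/-- the mapping cone of the inclusion `ℝ ↪ ℂ` is isomorphic as a real
⋆-algebra to `C₀^ℝ(iℝ) = {f ∈ C₀(ℝ, ℂ) : f(−x) = conj (f x)}`. -/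
theorem mappingCone_iso_CoRiR :
    Nonempty (mappingConeRealComplex ≃⋆ₐ[ℝ] CoRiR) :=
  ⟨(starSubalgebraEquivOfBijOn coneHom bijOn_coneHom).symm⟩
end
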